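/- Suppose char(K) = 0 and S = K[x_1,...,x_n]. Let I ⊆ S and J ⊆ S be homogeneous ideals such that Gin_lex(J) is a lex ideal. Then for a general change of coordinates g ∈ GL_n(K), one has H(I ∩ g(J), d) ≤ H(I^lex ∩ J^oplex, d) for all d ≥ 0. -/

import Mathlib

open MvPolynomial TensorProduct CategoryTheory

noncomputable section

/-- The polynomial ring `S = K[x_1,...,x_n]`, standard graded. -/
abbrev PS (K : Type) [Field K] (n : ℕ) : Type := MvPolynomial (Fin n) K

variable (K : Type) [Field K] (n : ℕ)

/-- An ideal of `S` is homogeneous if it contains all homogeneous components of its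
elements. -/
def IsHomog (I : Ideal (PS K n)) : Prop :=
  ∀ f ∈ I, ∀ d : ℕ, MvPolynomial.homogeneousComponent d f ∈ I

/-- The change of coordinates of `S` induced by `g ∈ GL_n(K)`, determined by
`g(x_i) = ∑_j g_{ji} x_j`. -/
def coordChange (g : GL (Fin n) K) : PS K n →ₐ[K] PS K n :=
  MvPolynomial.aeval (fun i => ∑ j, ((g : Matrix (Fin n) (Fin n) K) j i) • MvPolynomial.X j)

/-- A property `P` holds for a general change of coordinates `g ∈ GL_n(K)` if there is a
nonempty Zariski open subset `U ⊆ GL_n(K)` on which it holds; equivalently (as `GL_n(K)` is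
an irreducible variety over the infinite field `K`) there is a nonzero polynomial `F` in the
matrix entries such that `P g` holds whenever `F` does not vanish at `g`. -/
def generally (P : GL (Fin n) K → Prop) : Prop :=
  ∃ F : MvPolynomial (Fin n × Fin n) K, F ≠ 0 ∧
    ∀ g : GL (Fin n) K,
      MvPolynomial.eval (fun p => (g : Matrix (Fin n) (Fin n) K) p.1 p.2) F ≠ 0 → P g

/-- The Hilbert function: `H(I,d) = dim_K I_d`. -/
def hilb (I : Ideal (PS K n)) (d : ℕ) : ℕ :=
  Module.finrank K ↥(Submodule.restrictScalars K I ⊓ homogeneousSubmodule (Fin n) K d)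

/-- `a <_lex b` for the lexicographic order induced by `x_1 > x_2 > ⋯ > x_n`. -/
def lexLt (a b : Fin n →₀ ℕ) : Prop := Finsupp.Lex (· < ·) (· < ·) a b

/-- `a <_oplex b` for the (opposite) lexicographic order induced by `x_n > ⋯ > x_1`. -/
def oplexLt (a b : Fin n →₀ ℕ) : Prop := Finsupp.Lex (· > ·) (· < ·) a b

/-- The total degree of an exponent vector. -/
def expDeg (m : Fin n →₀ ℕ) : ℕ := ∑ i, m i

/-- A monomial ideal: together with any polynomial it contains each of its monomials. -/
def IsMonomialIdeal (I : Ideal (PS K n)) : Prop :=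
  ∀ f ∈ I, ∀ m ∈ f.support, MvPolynomial.monomial m (1 : K) ∈ I

/-- A lex ideal: a monomial ideal whose monomials form a lex set. -/
def IsLexIdeal (I : Ideal (PS K n)) : Prop :=
  IsMonomialIdeal K n I ∧ ∀ u v : Fin n →₀ ℕ, expDeg n u = expDeg n v →
    MvPolynomial.monomial u (1 : K) ∈ I → lexLt n u v →
      MvPolynomial.monomial v (1 : K) ∈ I

/-- An opposite lex ideal: a monomial ideal whose monomials form an opposite lex set. -/
def IsOplexIdeal (I : Ideal (PS K n)) : Prop :=
  IsMonomialIdeal K n I ∧ ∀ u v : Fin n →₀ ℕ, expDeg n u = expDeg n v →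
    MvPolynomial.monomial u (1 : K) ∈ I → oplexLt n u v →
      MvPolynomial.monomial v (1 : K) ∈ I

/-- The initial ideal `in_r(I)` of `I` with respect to a (strict) monomial order `r`:
the ideal generated by the `r`-maximal monomials of the nonzero elements of `I`. -/
def initialIdealO (r : (Fin n →₀ ℕ) → (Fin n →₀ ℕ) → Prop) (I : Ideal (PS K n)) :
    Ideal (PS K n) :=
  Ideal.span {g | ∃ f ∈ I, ∃ m ∈ f.support,
    (∀ m' ∈ f.support, m' = m ∨ r m' m) ∧ g = MvPolynomial.monomial m (1 : K)}

/-!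
Since `dim (I_d ∩ g J_d) = dim I_d + dim J_d - dim (I_d + g J_d)`, one has to bound the dimension of
the sum from below. For general `g` this dimension is maximal among all `g`, in all degrees at once:
the ideal `I + g J` for the matrix `g` of indeterminates has finitely many minimal leading exponents
(Dickson's lemma), and these survive the specialisation of `g` off a hypersurface.

The maximum over `g` of `dim (V + g W)` does not increase when `V` or `W` is replaced by a translate
or by its lex-initial space, because the latter is the limit of diagonal translates. In this way
`I_d` degenerates to the span of a strongly stable set of monomials `B`: as long as the set of
leading monomials is not strongly stable, a transvection moves it up, and characteristic `0` keeps
the binomial coefficients that occur nonzero. The space `J_d` degenerates to the lex space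
`Gin_lex(J)_d` and, reversing the variables, to `T = (J^oplex)_d`. The dimension of the sum is
therefore at least `|B ∪ T|`.

It remains to see that `|B ∩ T| ≤ |L ∩ T|` for the lex set `L` with `|L| = |B|`, which is proved by
induction on the number of variables, slicing by the exponent of the last one.
-/

variable {K n}

instance : IsStrictTotalOrder (Fin n →₀ ℕ) (lexLt n) :=
  inferInstanceAs (IsStrictTotalOrder (Lex (Fin n →₀ ℕ)) (· < ·))

instance : IsStrictTotalOrder (Fin n →₀ ℕ) (oplexLt n) :=
  inferInstanceAs (IsStrictTotalOrder (Colex (Fin n →₀ ℕ)) (· < ·))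

open scoped Finset

/-! ### Lex segments and strongly stable sets of monomials -/

section Segment

variable {α : Type*} {r : α → α → Prop} {S C D : Finset α}

/-- `C` is an `r`-segment of `S`: a subset of `S` closed under passing to `r`-larger elements
of `S`. Lex sets, opposite lex sets and their complements in a fixed degree are segments. -/
structure IsSegment (r : α → α → Prop) (S C : Finset α) : Prop where
  subset : C ⊆ S
  mem_of_rel : ∀ u ∈ C, ∀ v ∈ S, r u v → v ∈ C

theorem IsSegment.subset_of_card_le [Std.Trichotomous r] (hC : IsSegment r S C)
    (hD : IsSegment r S D) (h : #C ≤ #D) : C ⊆ D := by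
  by_contra hCD
  obtain ⟨c, hc, hcD⟩ := Finset.not_subset.1 hCD
  have hDC : D ⊆ C := fun e he ↦ by
    rcases trichotomous_of r c e with hce | rfl | hec
    · exact hC.mem_of_rel c hc e (hD.subset he) hce
    · exact hc
    · exact absurd (hD.mem_of_rel e he c (hC.subset hc) hec) hcD
  exact hCD (Finset.eq_of_subset_of_card_le hDC h).ge

theorem IsSegment.eq_of_card_eq [Std.Trichotomous r] (hC : IsSegment r S C)
    (hD : IsSegment r S D) (h : #C = #D) : C = D :=
  Finset.eq_of_subset_of_card_le (hC.subset_of_card_le hD h.le) h.ge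

theorem IsSegment.sdiff [DecidableEq α] (hC : IsSegment r S C) :
    IsSegment (fun u v ↦ r v u) S (S \ C) where
  subset := Finset.sdiff_subset
  mem_of_rel u hu v hv hvu := by
    rw [Finset.mem_sdiff] at hu ⊢
    exact ⟨hv, fun hvC ↦ hu.2 (hC.mem_of_rel v hvC u hu.1 hvu)⟩

theorem exists_isSegment_card_eq (r : α → α → Prop) [IsStrictTotalOrder α r] (S : Finset α)
    {c : ℕ} (hc : c ≤ #S) : ∃ C, IsSegment r S C ∧ #C = c := by
  classical
  let _ := linearOrderOfSTO r
  induction hc using Nat.decreasingInduction with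
  | self => exact ⟨S, ⟨subset_rfl, fun _ _ _ hv _ ↦ hv⟩, rfl⟩
  | of_succ c _ ih =>
    obtain ⟨C, hC, hcard⟩ := ih
    obtain ⟨m, hm, hmin⟩ := C.exists_min_image id (Finset.card_pos.1 (by omega))
    refine ⟨C.erase m, ⟨(Finset.erase_subset _ _).trans hC.subset, fun u hu v hv huv ↦ ?_⟩, ?_⟩
    · rw [Finset.mem_erase] at hu ⊢
      refine ⟨?_, hC.mem_of_rel u hu.2 v hv huv⟩
      rintro rfl
      exact (hmin u hu.2).not_gt huv
    · rw [Finset.card_erase_of_mem hm, hcard, Nat.add_sub_cancel]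

end Segment

/-- The exponent vectors of the monomials of degree `d` in `n` variables. -/
def degreeExps (n d : ℕ) : Finset (Fin n →₀ ℕ) := Finset.univ.finsuppAntidiag d

theorem mem_degreeExps {d : ℕ} {m : Fin n →₀ ℕ} : m ∈ degreeExps n d ↔ m.degree = d := by
  simp [degreeExps, Finsupp.degree_eq_sum]

/-- A set of monomials, given by their exponent vectors, is strongly stable if `w x_j ∈ B` and
`i < j` imply `w x_i ∈ B`. -/
def IsStronglyStable (B : Finset (Fin n →₀ ℕ)) : Prop :=
  ∀ (w : Fin n →₀ ℕ) (i j : Fin n), i < j →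
    w + Finsupp.single j 1 ∈ B → w + Finsupp.single i 1 ∈ B

theorem lexLt_iff {a b : Fin n →₀ ℕ} :
    lexLt n a b ↔ ∃ i, (∀ j < i, a j = b j) ∧ a i < b i := Iff.rfl

theorem oplexLt_iff {a b : Fin n →₀ ℕ} :
    oplexLt n a b ↔ ∃ i, (∀ j, i < j → a j = b j) ∧ a i < b i := Iff.rfl

theorem lexLt_add_single_last {a c : Fin (n + 1) →₀ ℕ} {i : Fin (n + 1)}
    (ha : ∀ j, i < j → a j = 0) (hdeg : a.degree = c.degree) (h : lexLt (n + 1) a c) :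
    lexLt (n + 1) (a + Finsupp.single i 1) (c + Finsupp.single (Fin.last n) 1) := by
  obtain ⟨k, hk, hak⟩ := lexLt_iff.1 h
  have hki : k < i := by
    by_contra! hik
    refine hdeg.not_lt ?_
    rw [Finsupp.degree_eq_sum, Finsupp.degree_eq_sum]
    refine Finset.sum_lt_sum (fun j _ ↦ ?_) ⟨k, Finset.mem_univ k, hak⟩
    rcases lt_trichotomy j k with hjk | rfl | hkj
    · exact (hk j hjk).le
    · exact hak.le
    · simp [ha j (hik.trans_lt hkj)]
  refine lexLt_iff.2 ⟨k, fun j hj ↦ ?_, ?_⟩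
  · simp [hk j hj, (hj.trans hki).ne, (hj.trans_le (Fin.le_last k)).ne]
  · simp [hki.ne, (hki.trans_le (Fin.le_last i)).ne, hak]

theorem lexLt_single_add_single {i j : Fin n} (h : i < j) (w : Fin n →₀ ℕ) :
    lexLt n (w + Finsupp.single j 1) (w + Finsupp.single i 1) :=
  lexLt_iff.2 ⟨i, fun l hl ↦ by simp [hl.ne, (hl.trans h).ne], by simp [h.ne]⟩

theorem exists_add_single_of_degree_ne_zero {b : Fin n →₀ ℕ} (hb : b.degree ≠ 0) :
    ∃ i a, (∀ j, i < j → a j = 0) ∧ a + Finsupp.single i 1 = b := by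
  have hne : b.support.Nonempty := by
    rw [Finsupp.support_nonempty_iff]
    rintro rfl
    exact hb (map_zero _)
  set i := b.support.max' hne
  have hi : Finsupp.single i 1 ≤ b :=
    Finsupp.single_le_iff.2 (Nat.one_le_iff_ne_zero.2 (by simpa using b.support.max'_mem hne))
  refine ⟨i, b - Finsupp.single i 1, fun j hj ↦ ?_, tsub_add_cancel_of_le hi⟩
  have hbj : b j = 0 := by
    by_contra hbj
    exact (b.support.le_max' j (Finsupp.mem_support_iff.2 hbj)).not_gt hj
  simp [hbj]

/-- The exponent vectors of the products `x_i u` with `u ∈ C`. -/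
def mulVars (C : Finset (Fin n →₀ ℕ)) : Finset (Fin n →₀ ℕ) :=
  (Finset.univ ×ˢ C).image fun p ↦ p.2 + Finsupp.single p.1 1

theorem mem_mulVars {C : Finset (Fin n →₀ ℕ)} {b : Fin n →₀ ℕ} :
    b ∈ mulVars C ↔ ∃ i, ∃ a ∈ C, a + Finsupp.single i 1 = b := by
  simp [mulVars]

/-- The monomials of degree `e` in the variables `x_0, …, x_i`. -/
def initialExps (e : ℕ) (i : Fin n) : Finset (Fin n →₀ ℕ) :=
  (degreeExps n e).filter fun a ↦ ∀ j, i < j → a j = 0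

theorem isSegment_initialExps (e : ℕ) (i : Fin n) :
    IsSegment (fun u v ↦ oplexLt n v u) (degreeExps n e) (initialExps e i) where
  subset := Finset.filter_subset _ _
  mem_of_rel u hu v hv hvu := by
    obtain ⟨k, hk, hvk⟩ := oplexLt_iff.1 hvu
    simp only [initialExps, Finset.mem_filter] at hu ⊢
    have hki : k ≤ i := not_lt.1 fun hik ↦ by simp [hu.2 k hik] at hvk
    exact ⟨hv, fun j hj ↦ (hk j (hki.trans_lt hj)).trans (hu.2 j hj)⟩

theorem sum_card_inter_initialExps_le_card_mulVars (C : Finset (Fin n →₀ ℕ)) (e : ℕ) :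
    ∑ i, #(C ∩ initialExps e i) ≤ #(mulVars C) := by
  rw [← Finset.card_sigma]
  refine Finset.card_le_card_of_injOn (fun p ↦ p.2 + Finsupp.single p.1 1)
    (fun p hp ↦ ?_) ?_
  · simp only [Finset.coe_sigma, Set.mem_sigma_iff, Finset.mem_coe, Finset.mem_inter] at hp
    exact mem_mulVars.2 ⟨p.1, p.2, hp.2.1, rfl⟩
  · rintro ⟨i, a⟩ hp ⟨j, b⟩ hq h
    simp only [initialExps, Finset.coe_sigma, Set.mem_sigma_iff, Finset.mem_coe,
      Finset.mem_inter, Finset.mem_filter] at hp hq h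
    obtain rfl : i = j := by
      rcases lt_trichotomy i j with hij | hij | hji
      · simpa [hp.2.2.2 j hij, hij.ne] using DFunLike.congr_fun h j
      · exact hij
      · simpa [hq.2.2.2 i hji, hji.ne] using DFunLike.congr_fun h i
    rw [add_right_cancel h]

section LexMul

variable {e : ℕ} {C : Finset (Fin (n + 1) →₀ ℕ)}

theorem IsSegment.exists_add_single_eq_of_lexLt
    (hC : IsSegment (lexLt (n + 1)) (degreeExps (n + 1) e) C) {b b' : Fin (n + 1) →₀ ℕ}
    (hb : b ∈ mulVars C) (hb' : b'.degree = e + 1) (hbb' : ¬ lexLt (n + 1) b' b) :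
    ∃ i, ∃ a ∈ C ∩ initialExps e i, a + Finsupp.single i 1 = b' := by
  obtain ⟨j, c, hc, rfl⟩ := mem_mulVars.1 hb
  obtain ⟨i, a, ha, rfl⟩ := exists_add_single_of_degree_ne_zero (b := b') (by omega)
  have hae : a.degree = e := by simpa using hb'
  have hce := mem_degreeExps.1 (hC.subset hc)
  have hac : ¬ lexLt (n + 1) a c := fun hac ↦ by
    have hlast := lexLt_add_single_last ha (hae.trans hce.symm) hac
    rcases (Fin.le_last j).lt_or_eq with hj | rfl
    · exact hbb' (_root_.trans hlast (lexLt_single_add_single hj c))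
    · exact hbb' hlast
  have haC : a ∈ C := by
    rcases trichotomous_of (lexLt (n + 1)) a c with h | rfl | h
    · exact absurd h hac
    · exact hc
    · exact hC.mem_of_rel c hc a (mem_degreeExps.2 hae) h
  exact ⟨i, a, Finset.mem_inter.2 ⟨haC, Finset.mem_filter.2 ⟨mem_degreeExps.2 hae, ha⟩⟩, rfl⟩

theorem IsSegment.mulVars_lex (hC : IsSegment (lexLt (n + 1)) (degreeExps (n + 1) e) C) :
    IsSegment (lexLt (n + 1)) (degreeExps (n + 1) (e + 1)) (mulVars C) where
  subset b hb := by
    obtain ⟨i, a, ha, rfl⟩ := mem_mulVars.1 hb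
    simpa [mem_degreeExps] using mem_degreeExps.1 (hC.subset ha)
  mem_of_rel b hb b' hb' hlt := by
    obtain ⟨i, a, ha, rfl⟩ :=
      hC.exists_add_single_eq_of_lexLt hb (mem_degreeExps.1 hb') (asymm hlt)
    exact mem_mulVars.2 ⟨i, a, (Finset.mem_inter.1 ha).1, rfl⟩

theorem IsSegment.card_mulVars_lex_le
    (hC : IsSegment (lexLt (n + 1)) (degreeExps (n + 1) e) C) :
    #(mulVars C) ≤ ∑ i, #(C ∩ initialExps e i) := by
  rw [← Finset.card_sigma]
  refine Finset.card_le_card_of_surjOn (fun p ↦ p.2 + Finsupp.single p.1 1) fun b hb ↦ ?_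
  obtain ⟨i, a, ha, rfl⟩ := hC.exists_add_single_eq_of_lexLt hb
    (mem_degreeExps.1 (hC.mulVars_lex.subset hb)) (irrefl b)
  exact ⟨⟨i, a⟩, by simpa using ha, rfl⟩

end LexMul

/-- Among strongly stable sets of a given size in `n` variables, lex segments have the smallest
intersection with every reverse lex segment. -/
def LexMinimizesRevlex (n : ℕ) : Prop :=
  ∀ (d : ℕ) (B L R : Finset (Fin n →₀ ℕ)), IsStronglyStable B → B ⊆ degreeExps n d →
    IsSegment (lexLt n) (degreeExps n d) L →
    IsSegment (fun u v ↦ oplexLt n v u) (degreeExps n d) R → #L ≤ #B → #(L ∩ R) ≤ #(B ∩ R)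

theorem LexMinimizesRevlex.mulVars_subset (hn : LexMinimizesRevlex (n + 1)) {e : ℕ}
    {B B' C C' : Finset (Fin (n + 1) →₀ ℕ)} (hB : IsStronglyStable B)
    (hBe : B ⊆ degreeExps (n + 1) e) (hBB' : mulVars B ⊆ B')
    (hC : IsSegment (lexLt (n + 1)) (degreeExps (n + 1) e) C)
    (hC' : IsSegment (lexLt (n + 1)) (degreeExps (n + 1) (e + 1)) C')
    (hCB : #C = #B) (hCB' : #C' = #B') : mulVars C ⊆ C' :=
  hC.mulVars_lex.subset_of_card_le hC' <| calc
    #(mulVars C) ≤ ∑ i, #(C ∩ initialExps e i) := hC.card_mulVars_lex_le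
    _ ≤ ∑ i, #(B ∩ initialExps e i) := Finset.sum_le_sum fun i _ ↦
      hn e B C _ hB hBe hC (isSegment_initialExps e i) hCB.le
    _ ≤ #(mulVars B) := sum_card_inter_initialExps_le_card_mulVars B e
    _ ≤ #B' := Finset.card_le_card hBB'
    _ = #C' := hCB'.symm

/-! ### Slices by the exponent of the last variable -/

/-- The exponent vector of `u x_n^k`, where `x_n` is the variable added to the ring. -/
def snocExp (u : Fin n →₀ ℕ) (k : ℕ) : Fin (n + 1) →₀ ℕ :=
  Finsupp.equivFunOnFinite.symm (Fin.snoc u k)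

section SnocExp

variable (u : Fin n →₀ ℕ) (k : ℕ)

@[simp]
theorem snocExp_castSucc (i : Fin n) : snocExp u k i.castSucc = u i := by
  simp [snocExp]

@[simp]
theorem snocExp_last : snocExp u k (Fin.last n) = k := by
  simp [snocExp]

theorem snocExp_ext {a b : Fin (n + 1) →₀ ℕ} (h : ∀ i : Fin n, a i.castSucc = b i.castSucc)
    (hlast : a (Fin.last n) = b (Fin.last n)) : a = b :=
  Finsupp.ext (Fin.lastCases hlast h)

@[simp]
theorem degree_snocExp : (snocExp u k).degree = u.degree + k := by
  simp [Finsupp.degree_eq_sum, Fin.sum_univ_castSucc]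

theorem snocExp_add_single (i : Fin n) :
    snocExp (u + Finsupp.single i 1) k = snocExp u k + Finsupp.single i.castSucc 1 :=
  snocExp_ext (fun j ↦ by simp [Finsupp.single_apply]) (by simp)

theorem snocExp_succ : snocExp u (k + 1) = snocExp u k + Finsupp.single (Fin.last n) 1 :=
  snocExp_ext (fun j ↦ by simp) (by simp)

theorem snocExp_injective : Function.Injective fun u : Fin n →₀ ℕ ↦ snocExp u k :=
  fun u v h ↦ Finsupp.ext fun i ↦ by simpa using DFunLike.congr_fun h i.castSucc

end SnocExp

theorem exists_snocExp_eq (a : Fin (n + 1) →₀ ℕ) : ∃ u, snocExp u (a (Fin.last n)) = a :=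
  ⟨Finsupp.equivFunOnFinite.symm fun i ↦ a i.castSucc, snocExp_ext (by simp) (by simp)⟩

theorem lexLt_snocExp {u v : Fin n →₀ ℕ} {k l : ℕ} (h : lexLt n u v) :
    lexLt (n + 1) (snocExp u k) (snocExp v l) := by
  obtain ⟨i, hi, hlt⟩ := lexLt_iff.1 h
  refine lexLt_iff.2 ⟨i.castSucc, fun j hj ↦ ?_, by simpa using hlt⟩
  cases j using Fin.lastCases with
  | last => exact absurd (Fin.le_last _) hj.not_ge
  | cast j => simpa using hi j (by simpa using hj)

theorem oplexLt_snocExp {u v : Fin n →₀ ℕ} {k : ℕ} (h : oplexLt n u v) :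
    oplexLt (n + 1) (snocExp u k) (snocExp v k) := by
  obtain ⟨i, hi, hlt⟩ := oplexLt_iff.1 h
  refine oplexLt_iff.2 ⟨i.castSucc, fun j hj ↦ ?_, by simpa using hlt⟩
  cases j using Fin.lastCases with
  | last => simp
  | cast j => simpa using hi j (by simpa using hj)

theorem oplexLt_snocExp_of_lt (u v : Fin n →₀ ℕ) {k l : ℕ} (h : k < l) :
    oplexLt (n + 1) (snocExp u k) (snocExp v l) :=
  oplexLt_iff.2 ⟨Fin.last n, fun j hj ↦ absurd (Fin.le_last j) hj.not_ge, by simpa using h⟩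

theorem lexLt_of_lexLt_add_single_last {u m : Fin (n + 1) →₀ ℕ} {l : ℕ}
    (h : lexLt (n + 1) m (u + Finsupp.single (Fin.last n) l))
    (hdeg : m.degree = u.degree + l) : lexLt (n + 1) m u := by
  obtain ⟨i, hi, hlt⟩ := lexLt_iff.1 h
  have hil : i < Fin.last n := by
    refine (Fin.le_last i).lt_of_ne ?_
    rintro rfl
    have hdeg' : m.degree < (u + Finsupp.single (Fin.last n) l).degree := by
      rw [Finsupp.degree_eq_sum, Finsupp.degree_eq_sum]
      refine Finset.sum_lt_sum (fun j _ ↦ ?_) ⟨_, Finset.mem_univ _, hlt⟩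
      rcases (Fin.le_last j).lt_or_eq with hj | rfl
      exacts [(hi j hj).le, hlt.le]
    simp [hdeg] at hdeg'
  refine lexLt_iff.2 ⟨i, fun j hj ↦ ?_, by simpa [hil.ne] using hlt⟩
  simpa [(hj.trans hil).ne] using hi j hj

/-- The monomials `u` in the first `n` variables with `u x_n^k ∈ B`. -/
def slice (B : Finset (Fin (n + 1) →₀ ℕ)) (k : ℕ) : Finset (Fin n →₀ ℕ) :=
  B.preimage (snocExp · k) (snocExp_injective k).injOn

section Slice

variable {d k : ℕ} {B R : Finset (Fin (n + 1) →₀ ℕ)} {u : Fin n →₀ ℕ}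

theorem mem_slice : u ∈ slice B k ↔ snocExp u k ∈ B := Finset.mem_preimage

theorem slice_inter : slice (B ∩ R) k = slice B k ∩ slice R k := by
  ext u
  simp [mem_slice]

theorem slice_subset (hB : B ⊆ degreeExps (n + 1) d) : slice B k ⊆ degreeExps n (d - k) :=
  fun u hu ↦ by
    have := mem_degreeExps.1 (hB (mem_slice.1 hu))
    rw [degree_snocExp] at this
    exact mem_degreeExps.2 (by omega)

theorem card_eq_sum_slice (hB : B ⊆ degreeExps (n + 1) d) :
    #B = ∑ k ∈ Finset.range (d + 1), #(slice B k) := by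
  have hlast : Set.MapsTo (fun a : Fin (n + 1) →₀ ℕ ↦ a (Fin.last n)) B
      (Finset.range (d + 1)) := fun a ha ↦ by
    rw [Finset.coe_range, Set.mem_Iio, Nat.lt_succ_iff, ← mem_degreeExps.1 (hB ha)]
    exact Finsupp.le_degree _ _
  rw [Finset.card_eq_sum_card_fiberwise hlast]
  refine Finset.sum_congr rfl fun k _ ↦ ?_
  rw [← Finset.card_map (s := slice B k) ⟨_, snocExp_injective k⟩]
  refine congrArg Finset.card (Finset.ext fun a ↦ ?_)
  simp only [Finset.mem_filter, Finset.mem_map, mem_slice, Function.Embedding.coeFn_mk]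
  constructor
  · rintro ⟨ha, rfl⟩
    obtain ⟨u, hu⟩ := exists_snocExp_eq a
    exact ⟨u, by rwa [hu], hu⟩
  · rintro ⟨u, hu, rfl⟩
    exact ⟨hu, snocExp_last u k⟩

theorem snocExp_mem_degreeExps (hB : B ⊆ degreeExps (n + 1) d) (hu : u ∈ slice B k)
    {v : Fin n →₀ ℕ} {l : ℕ} (hl : l ≤ k) (hv : v ∈ degreeExps n (d - l)) :
    snocExp v l ∈ degreeExps (n + 1) d := by
  have := mem_degreeExps.1 (hB (mem_slice.1 hu))
  rw [mem_degreeExps, degree_snocExp] at *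
  omega

theorem IsSegment.slice_revlex
    (hR : IsSegment (fun u v ↦ oplexLt (n + 1) v u) (degreeExps (n + 1) d) R) (k : ℕ) :
    IsSegment (fun u v ↦ oplexLt n v u) (degreeExps n (d - k)) (slice R k) where
  subset := slice_subset hR.subset
  mem_of_rel _ hu _ hv hvu := mem_slice.2 <| hR.mem_of_rel _ (mem_slice.1 hu) _
    (snocExp_mem_degreeExps hR.subset hu le_rfl hv) (oplexLt_snocExp hvu)

theorem IsSegment.degreeExps_subset_slice_revlex
    (hR : IsSegment (fun u v ↦ oplexLt (n + 1) v u) (degreeExps (n + 1) d) R)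
    (hne : (slice R k).Nonempty) {l : ℕ} (hl : l < k) : degreeExps n (d - l) ⊆ slice R l := by
  obtain ⟨u, hu⟩ := hne
  exact fun v hv ↦ mem_slice.2 <| hR.mem_of_rel _ (mem_slice.1 hu) _
    (snocExp_mem_degreeExps hR.subset hu hl.le hv) (oplexLt_snocExp_of_lt v u hl)

theorem IsStronglyStable.slice (hB : IsStronglyStable B) (k : ℕ) :
    IsStronglyStable (slice B k) := fun w i j hij hj ↦ by
  rw [mem_slice, snocExp_add_single] at hj ⊢
  exact hB _ _ _ (by simpa using hij) hj

theorem IsStronglyStable.mulVars_slice_subset (hB : IsStronglyStable B) (k : ℕ) :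
    mulVars (_root_.slice B (k + 1)) ⊆ _root_.slice B k := fun b hb ↦ by
  obtain ⟨i, a, ha, rfl⟩ := mem_mulVars.1 hb
  rw [mem_slice, snocExp_succ] at ha
  rw [mem_slice, snocExp_add_single]
  exact hB _ _ _ (Fin.castSucc_lt_last i) ha

end Slice

section Comparison

variable {d : ℕ} {L R : Finset (Fin (n + 2) →₀ ℕ)} {C : ℕ → Finset (Fin (n + 1) →₀ ℕ)}

theorem add_single_last_mem_of_mulVars_subset (hmul : ∀ k < d, mulVars (C (k + 1)) ⊆ C k)
    {k l : ℕ} (hkl : k + l ≤ d) {u : Fin (n + 1) →₀ ℕ} (hu : u ∈ C (k + l)) :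
    u + Finsupp.single (Fin.last n) l ∈ C k := by
  induction l generalizing u with
  | zero => simpa using hu
  | succ l ih =>
    have hu' := ih (by omega) (hmul (k + l) (by omega) (mem_mulVars.2 ⟨Fin.last n, u, hu, rfl⟩))
    rwa [add_assoc, ← Finsupp.single_add, add_comm 1 l] at hu'

theorem subset_slice_of_not_slice_subset
    (hC : ∀ k, IsSegment (lexLt (n + 1)) (degreeExps (n + 1) (d - k)) (C k))
    (hmul : ∀ k < d, mulVars (C (k + 1)) ⊆ C k)
    (hL : IsSegment (lexLt (n + 2)) (degreeExps (n + 2) d) L)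
    {k l : ℕ} (hk : ¬ slice L k ⊆ C k) (hkl : k ≤ l) (hld : l ≤ d) : C l ⊆ slice L l := by
  obtain ⟨m, hmL, hmC⟩ := Finset.not_subset.1 hk
  obtain ⟨l, rfl⟩ := Nat.exists_eq_add_of_le hkl
  intro u hu
  have hu' := add_single_last_mem_of_mulVars_subset hmul hld hu
  have hmd := slice_subset hL.subset hmL
  have hlt : lexLt (n + 1) m (u + Finsupp.single (Fin.last n) l) := by
    rcases trichotomous_of (lexLt (n + 1)) m (u + Finsupp.single (Fin.last n) l) with h | rfl | h
    · exact h
    · exact absurd hu' hmC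
    · exact absurd ((hC k).mem_of_rel _ hu' m hmd h) hmC
  have hud := mem_degreeExps.1 ((hC _).subset hu)
  rw [mem_degreeExps] at hmd
  refine mem_slice.2 (hL.mem_of_rel _ (mem_slice.1 hmL) _ ?_
    (lexLt_snocExp (lexLt_of_lexLt_add_single_last hlt (by omega))))
  rw [mem_degreeExps, degree_snocExp]
  omega

theorem sum_card_slice_inter_le
    (hC : ∀ k, IsSegment (lexLt (n + 1)) (degreeExps (n + 1) (d - k)) (C k))
    (hmul : ∀ k < d, mulVars (C (k + 1)) ⊆ C k)
    (hL : IsSegment (lexLt (n + 2)) (degreeExps (n + 2) d) L)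
    (hR : IsSegment (fun u v ↦ oplexLt (n + 2) v u) (degreeExps (n + 2) d) R)
    (hcard : ∑ k ∈ Finset.range (d + 1), #(slice L k) ≤ ∑ k ∈ Finset.range (d + 1), #(C k)) :
    ∑ k ∈ Finset.range (d + 1), #(slice L k ∩ slice R k) ≤
      ∑ k ∈ Finset.range (d + 1), #(C k ∩ slice R k) := by
  by_cases hLC : ∀ k, (slice R k).Nonempty → slice L k ⊆ C k
  · refine Finset.sum_le_sum fun k _ ↦ ?_
    rcases (slice R k).eq_empty_or_nonempty with hempty | hne
    · simp [hempty]
    · exact Finset.card_le_card (Finset.inter_subset_inter_right (hLC k hne))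
  push Not at hLC
  obtain ⟨k, hne, hk⟩ := hLC
  have hsdiff : ∑ l ∈ Finset.range (d + 1), #(C l \ slice R l) ≤
      ∑ l ∈ Finset.range (d + 1), #(slice L l \ slice R l) := by
    refine Finset.sum_le_sum fun l hl ↦ ?_
    rcases lt_or_ge l k with hlk | hkl
    · have hRl := (hC l).subset.trans (hR.degreeExps_subset_slice_revlex hne hlk)
      simp [Finset.sdiff_eq_empty_iff_subset.2 hRl]
    · exact Finset.card_le_card (Finset.sdiff_subset_sdiff (subset_slice_of_not_slice_subset hC
        hmul hL hk hkl (Nat.lt_succ_iff.1 (Finset.mem_range.1 hl))) subset_rfl)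
  have hsplit (X : ℕ → Finset (Fin (n + 1) →₀ ℕ)) : ∑ l ∈ Finset.range (d + 1), #(X l) =
      ∑ l ∈ Finset.range (d + 1), #(X l ∩ slice R l) +
        ∑ l ∈ Finset.range (d + 1), #(X l \ slice R l) := by
    simp_rw [← Finset.sum_add_distrib, Finset.card_inter_add_card_sdiff]
  have hsplitC := hsplit C
  have hsplitL := hsplit (slice L)
  omega

end Comparison

theorem LexMinimizesRevlex.succ (hn : LexMinimizesRevlex (n + 1)) :
    LexMinimizesRevlex (n + 2) := by
  intro d B L R hB hBd hL hR hcard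
  have hexists (k : ℕ) := exists_isSegment_card_eq (lexLt (n + 1))
    (degreeExps (n + 1) (d - k)) (Finset.card_le_card (slice_subset (k := k) hBd))
  choose C hC hCcard using hexists
  have hmul (k : ℕ) (hk : k < d) : mulVars (C (k + 1)) ⊆ C k := by
    have hCk := hC k
    rw [show d - k = d - (k + 1) + 1 by omega] at hCk
    exact hn.mulVars_subset (hB.slice _) (slice_subset hBd) (hB.mulVars_slice_subset k)
      (hC _) hCk (hCcard _) (hCcard _)
  have hLC : ∑ k ∈ Finset.range (d + 1), #(slice L k) ≤ ∑ k ∈ Finset.range (d + 1), #(C k) := by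
    simpa only [hCcard, ← card_eq_sum_slice hBd, ← card_eq_sum_slice hL.subset] using hcard
  have hsub {X} (hX : X ⊆ degreeExps (n + 2) d) : X ∩ R ⊆ degreeExps (n + 2) d :=
    Finset.inter_subset_left.trans hX
  calc #(L ∩ R) = ∑ k ∈ Finset.range (d + 1), #(slice L k ∩ slice R k) := by
        simp only [card_eq_sum_slice (hsub hL.subset), slice_inter]
    _ ≤ ∑ k ∈ Finset.range (d + 1), #(C k ∩ slice R k) :=
        sum_card_slice_inter_le hC hmul hL hR hLC
    _ ≤ ∑ k ∈ Finset.range (d + 1), #(slice B k ∩ slice R k) := Finset.sum_le_sum fun k _ ↦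
        hn _ _ _ _ (hB.slice k) (slice_subset hBd) (hC k) (hR.slice_revlex k) (hCcard k).le
    _ = #(B ∩ R) := by simp only [card_eq_sum_slice (hsub hBd), slice_inter]

theorem lexMinimizesRevlex_of_subsingleton [Subsingleton (Fin n)] : LexMinimizesRevlex n := by
  intro d B L R _ hBd hL _ hcard
  refine Finset.card_le_card (Finset.inter_subset_inter_right fun x hx ↦ ?_)
  obtain ⟨y, hy⟩ := Finset.card_pos.1 ((Finset.card_pos.2 ⟨x, hx⟩).trans_le hcard)
  have hxy : x.degree = y.degree :=
    (mem_degreeExps.1 (hL.subset hx)).trans (mem_degreeExps.1 (hBd hy)).symm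
  rw [Finsupp.degree_eq_sum, Finsupp.degree_eq_sum] at hxy
  rwa [show x = y from Finsupp.ext fun i ↦ by rwa [Fintype.sum_subsingleton _ i,
    Fintype.sum_subsingleton _ i] at hxy]

theorem lexMinimizesRevlex : ∀ n, LexMinimizesRevlex n
  | 0 | 1 => lexMinimizesRevlex_of_subsingleton
  | n + 2 => (lexMinimizesRevlex (n + 1)).succ

theorem IsStronglyStable.card_inter_oplex_le {d : ℕ} {B L T : Finset (Fin n →₀ ℕ)}
    (hB : IsStronglyStable B) (hBd : B ⊆ degreeExps n d)
    (hL : IsSegment (lexLt n) (degreeExps n d) L)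
    (hT : IsSegment (oplexLt n) (degreeExps n d) T) (hcard : #L = #B) :
    #(B ∩ T) ≤ #(L ∩ T) := by
  have hle := lexMinimizesRevlex n d B L _ hB hBd hL hT.sdiff hcard.le
  have hinter {X} (hX : X ⊆ degreeExps n d) : X ∩ (degreeExps n d \ T) = X \ T := by
    rw [← Finset.inter_sdiff_assoc, Finset.inter_eq_left.2 hX]
  rw [hinter hL.subset, hinter hBd] at hle
  have hL' := Finset.card_inter_add_card_sdiff L T
  have hB' := Finset.card_inter_add_card_sdiff B T
  omega

/-! ### Coefficient minors and leading exponents -/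

section CoeffMinor

variable {σ ι A A' k : Type*} [Fintype ι] [DecidableEq ι] [CommRing A] [CommRing A'] [Field k]

/-- The minor of the coefficient matrix of the polynomials `p i` formed by the monomials with
exponent vectors `m j`. -/
def coeffMinor (p : ι → MvPolynomial σ A) (m : ι → σ →₀ ℕ) : A :=
  (Matrix.of fun i j ↦ coeff (m j) (p i)).det

theorem coeffMinor_map (η : A →+* A') (p : ι → MvPolynomial σ A) (m : ι → σ →₀ ℕ) :
    coeffMinor (fun i ↦ MvPolynomial.map η (p i)) m = η (coeffMinor p m) := by
  simp only [coeffMinor, coeff_map, RingHom.map_det]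
  rfl

theorem linearIndependent_of_coeffMinor_ne_zero [IsDomain A] {p : ι → MvPolynomial σ A}
    {m : ι → σ →₀ ℕ} (h : coeffMinor p m ≠ 0) : LinearIndependent A p := by
  rw [Fintype.linearIndependent_iff]
  intro c hc
  refine congrFun (Matrix.eq_zero_of_vecMul_eq_zero h (funext fun j ↦ ?_))
  simpa [Matrix.vecMul, dotProduct, coeff_sum] using congrArg (coeff (m j)) hc

theorem card_le_finrank_of_coeffMinor_ne_zero {V : Submodule k (MvPolynomial σ k)}
    [FiniteDimensional k V] {p : ι → MvPolynomial σ k} (hp : ∀ i, p i ∈ V) {m : ι → σ →₀ ℕ}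
    (h : coeffMinor p m ≠ 0) : Fintype.card ι ≤ Module.finrank k V := by
  have hli : LinearIndependent k fun i ↦ (⟨p i, hp i⟩ : V) :=
    .of_comp V.subtype (linearIndependent_of_coeffMinor_ne_zero h)
  exact hli.fintype_card_le_finrank

theorem exists_coeffMinor_ne_zero {p : ι → MvPolynomial σ k} (hp : LinearIndependent k p) :
    ∃ m, coeffMinor p m ≠ 0 := by
  have hspan : Submodule.span k (Set.range fun (m : σ →₀ ℕ) i ↦ coeff m (p i)) = ⊤ := by
    by_contra hne
    obtain ⟨f, hf, hle⟩ := Submodule.exists_le_ker_of_lt_top _ (lt_top_iff_ne_top.2 hne)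
    refine hf (LinearMap.pi_ext' fun i ↦ LinearMap.ext_ring ?_)
    refine Fintype.linearIndependent_iff.1 hp (fun i ↦ f (Pi.single i 1)) ?_ i
    ext m
    have hm : f (fun i ↦ coeff m (p i)) = 0 := hle (Submodule.subset_span ⟨m, rfl⟩)
    rw [pi_eq_sum_univ' fun i ↦ coeff m (p i), map_sum] at hm
    simpa [coeff_sum, mul_comm, Pi.single_apply, funext_iff] using hm
  obtain ⟨κ, a, -, hκ, hli⟩ :=
    exists_linearIndependent' k fun (m : σ →₀ ℕ) i ↦ coeff m (p i)
  let b := Module.Basis.mk hli (by rw [hκ, hspan])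
  let e : ι ≃ κ := (Pi.basisFun k ι).indexEquiv b
  refine ⟨a ∘ e, fun h ↦ ?_⟩
  have hrows : LinearIndependent k (Matrix.of fun i j ↦ coeff (a (e i)) (p j)).row :=
    hli.comp e e.injective
  rw [Matrix.linearIndependent_rows_iff_isUnit, Matrix.isUnit_iff_isUnit_det,
    isUnit_iff_ne_zero, ← Matrix.det_transpose] at hrows
  exact hrows h

theorem exists_coeffMinor_ne_zero_of_span (ε : A →+* k) {P : Set (MvPolynomial σ A)}
    {V : Submodule k (MvPolynomial σ k)} [FiniteDimensional k V]
    (hV : Submodule.span k (MvPolynomial.map ε '' P) = V) :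
    ∃ (p : Fin (Module.finrank k V) → MvPolynomial σ A) (m : Fin (Module.finrank k V) → σ →₀ ℕ),
      (∀ i, p i ∈ P) ∧ ε (coeffMinor p m) ≠ 0 := by
  subst hV
  obtain ⟨q, hq, -, hli⟩ := Submodule.exists_fun_fin_finrank_span_eq k (MvPolynomial.map ε '' P)
  choose p hp hpq using hq
  obtain ⟨m, hm⟩ := exists_coeffMinor_ne_zero hli
  refine ⟨p, m, hp, ?_⟩
  rwa [← coeffMinor_map, funext hpq]

end CoeffMinor

section LeadingExps

variable {σ A k : Type*} [CommRing A] [Field k] (ord : MonomialOrder σ)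

/-- The leading exponents of the nonzero polynomials of `s`. -/
def leadingExps (s : Set (MvPolynomial σ A)) : Set (σ →₀ ℕ) := ord.degree '' (s \ {0})

variable {ord}

theorem linearIndependent_of_injective_degree {ι : Type*} {f : ι → MvPolynomial σ k}
    (hf : ∀ i, f i ≠ 0) (hinj : Function.Injective fun i ↦ ord.degree (f i)) :
    LinearIndependent k f := by
  classical
  rw [linearIndependent_iff']
  intro s c hc
  by_contra! ⟨i₀, hi₀, hci₀⟩
  obtain ⟨i, hi, hmax⟩ := {i ∈ s | c i ≠ 0}.exists_max_image (fun i ↦ ord.toSyn (ord.degree (f i)))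
    ⟨i₀, Finset.mem_filter.2 ⟨hi₀, hci₀⟩⟩
  rw [Finset.mem_filter] at hi
  have hcoeff := congrArg (coeff (ord.degree (f i))) hc
  rw [coeff_sum, Finset.sum_eq_single_of_mem i hi.1, coeff_smul, coeff_zero,
    smul_eq_zero, ord.coeff_degree_eq_zero_iff] at hcoeff
  · exact hcoeff.elim hi.2 (hf i)
  · intro j hj hji
    by_cases hcj : c j = 0
    · rw [hcj, zero_smul, coeff_zero]
    · rw [coeff_smul, ord.coeff_eq_zero_of_lt, smul_zero]
      exact (hmax j (Finset.mem_filter.2 ⟨hj, hcj⟩)).lt_of_ne fun h ↦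
        hji (hinj (ord.toSyn.injective h))

theorem card_le_finrank_of_subset_leadingExps {V : Submodule k (MvPolynomial σ k)}
    [FiniteDimensional k V] {Λ : Finset (σ →₀ ℕ)}
    (h : (Λ : Set (σ →₀ ℕ)) ⊆ leadingExps ord (V : Set (MvPolynomial σ k))) :
    #Λ ≤ Module.finrank k V := by
  choose f hf hdeg using fun m : Λ ↦ h m.2
  have hli : LinearIndependent k fun m ↦ (⟨f m, (hf m).1⟩ : V) :=
    .of_comp V.subtype <| linearIndependent_of_injective_degree (ord := ord) (fun m ↦ (hf m).2)
      fun m m' h ↦ Subtype.ext <| by rw [← hdeg m, ← hdeg m']; exact h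
  simpa using hli.fintype_card_le_finrank

theorem card_le_of_leadingExps_subset [Nontrivial A] {ι : Type*} [Fintype ι]
    {p : ι → MvPolynomial σ A} (hp : LinearIndependent A p) {Λ : Finset (σ →₀ ℕ)}
    (h : leadingExps ord (Submodule.span A (Set.range p) : Set (MvPolynomial σ A)) ⊆ Λ) :
    Fintype.card ι ≤ #Λ := by
  let T : (ι → A) →ₗ[A] (Λ → A) :=
    LinearMap.pi fun m ↦ MvPolynomial.lcoeff A m.1 ∘ₗ Fintype.linearCombination A p
  suffices hT : Function.Injective T by simpa using card_le_of_injective A T hT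
  refine (injective_iff_map_eq_zero T).2 fun c hc ↦ ?_
  refine funext (Fintype.linearIndependent_iff.1 hp c ?_)
  by_contra hne
  have hmem : ∑ i, c i • p i ∈ Submodule.span A (Set.range p) :=
    Submodule.sum_mem _ fun i _ ↦ Submodule.smul_mem _ _ (Submodule.subset_span ⟨i, rfl⟩)
  exact ord.coeff_degree_ne_zero_iff.2 hne (congrFun hc ⟨_, h ⟨_, ⟨hmem, hne⟩, rfl⟩⟩)

theorem finrank_le_of_leadingExps_subset {V : Submodule k (MvPolynomial σ k)}
    [FiniteDimensional k V] {Λ : Finset (σ →₀ ℕ)}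
    (h : leadingExps ord (V : Set (MvPolynomial σ k)) ⊆ Λ) : Module.finrank k V ≤ #Λ := by
  let b := Module.finBasis k V
  have hb : LinearIndependent k fun i ↦ (b i : MvPolynomial σ k) :=
    b.linearIndependent.map' V.subtype V.ker_subtype
  have hspan : Submodule.span k (Set.range fun i ↦ (b i : MvPolynomial σ k)) = V := by
    rw [Set.range_comp' Subtype.val b, ← Submodule.coe_subtype V, Submodule.span_image, b.span_eq,
      Submodule.map_subtype_top]
  simpa using card_le_of_leadingExps_subset hb (hspan ▸ h)

theorem leadingExps_subset_degree_eq {d : ℕ} {V : Submodule A (MvPolynomial σ A)}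
    (hV : V ≤ homogeneousSubmodule σ A d) :
    leadingExps ord (V : Set (MvPolynomial σ A)) ⊆ {m | m.degree = d} := by
  rintro _ ⟨f, ⟨hf, hf0⟩, rfl⟩
  rw [Set.mem_ofPred_eq, Finsupp.degree_eq_weight_one]
  exact hV hf (ord.coeff_degree_ne_zero_iff.2 hf0)

end LeadingExps

section InitialSpace

variable {V : Submodule K (PS K n)} {d : ℕ}

/-- The initial space of a space of polynomials: the span of the lex-leading monomials of its
elements. -/
def initialSpace (V : Submodule K (PS K n)) : Submodule K (PS K n) :=
  restrictSupport K (leadingExps MonomialOrder.lex (V : Set (PS K n)))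

instance : FiniteDimensional K (homogeneousSubmodule (Fin n) K d) :=
  Module.Finite.iff_fg.2 (homogeneousSubmodule_fg _ _ d)

theorem restrictSupport_le_homogeneousSubmodule {B : Finset (Fin n →₀ ℕ)}
    (hB : B ⊆ degreeExps n d) :
    restrictSupport K (B : Set (Fin n →₀ ℕ)) ≤ homogeneousSubmodule (Fin n) K d := by
  rw [homogeneousSubmodule_eq_finsupp_supported]
  exact restrictSupport_mono K fun m hm ↦ mem_degreeExps.1 (hB hm)

theorem finrank_restrictSupport (B : Finset (Fin n →₀ ℕ)) :
    Module.finrank K (restrictSupport K (B : Set (Fin n →₀ ℕ))) = #B := by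
  rw [Module.finrank_eq_card_basis (basisRestrictSupport K (B : Set (Fin n →₀ ℕ)))]
  exact Fintype.card_coe B

theorem exists_leadingExps_eq (hV : V ≤ homogeneousSubmodule (Fin n) K d) :
    ∃ B ⊆ degreeExps n d, leadingExps MonomialOrder.lex (V : Set (PS K n)) = B ∧
      #B = Module.finrank K V := by
  classical
  have := Submodule.finiteDimensional_of_le hV
  have hB : leadingExps MonomialOrder.lex (V : Set (PS K n)) =
      {m ∈ degreeExps n d | m ∈ leadingExps MonomialOrder.lex (V : Set (PS K n))} := by
    ext m
    simpa [mem_degreeExps] using fun h ↦ leadingExps_subset_degree_eq hV h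
  exact ⟨_, Finset.filter_subset _ _, hB, (card_le_finrank_of_subset_leadingExps hB.ge).antisymm
    (finrank_le_of_leadingExps_subset hB.le)⟩

instance (B : Finset (Fin n →₀ ℕ)) :
    FiniteDimensional K (restrictSupport K (B : Set (Fin n →₀ ℕ))) :=
  .of_basis (basisRestrictSupport K _)

theorem finiteDimensional_initialSpace (hV : V ≤ homogeneousSubmodule (Fin n) K d) :
    FiniteDimensional K (initialSpace V) := by
  obtain ⟨B, -, hB, -⟩ := exists_leadingExps_eq hV
  rw [initialSpace, hB]
  infer_instance

theorem span_leadingTerm (V : Submodule K (PS K n)) :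
    Submodule.span K (MonomialOrder.lex.leadingTerm '' (V : Set (PS K n))) = initialSpace V := by
  refine le_antisymm (Submodule.span_le.2 ?_) ?_
  · rintro _ ⟨f, hf, rfl⟩
    rcases eq_or_ne f 0 with rfl | hf0
    · simp
    · exact (monomial_mem_restrictSupport K).2 (.inl ⟨f, ⟨hf, hf0⟩, rfl⟩)
  · rw [initialSpace, restrictSupport_eq_span, Submodule.span_le]
    rintro _ ⟨_, ⟨f, ⟨hf, hf0⟩, rfl⟩, rfl⟩
    have hc := MonomialOrder.lex.leadingCoeff_ne_zero_iff.2 hf0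
    rw [SetLike.mem_coe, ← Submodule.smul_mem_iff _ hc, smul_monomial, smul_eq_mul, mul_one]
    exact Submodule.subset_span ⟨f, hf, rfl⟩

end InitialSpace

/-! ### Linear substitutions and translates -/

section Substitution

variable {A A' : Type*} [CommRing A] [Algebra K A] [CommRing A'] [Algebra K A'] {d : ℕ}

/-- The linear substitution `x_i ↦ ∑_j M_{ji} x_j` given by a matrix over a `K`-algebra. For an
invertible matrix over `K` it is `coordChange`; the generic change of coordinates is the case of
a matrix of indeterminates. -/
def linearSubst (M : Matrix (Fin n) (Fin n) A) : PS K n →ₐ[K] MvPolynomial (Fin n) A :=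
  aeval fun i ↦ ∑ j, M j i • X j

theorem linearSubst_X (M : Matrix (Fin n) (Fin n) A) (i : Fin n) :
    linearSubst M (X i : PS K n) = ∑ j, M j i • X j := aeval_X _ i

theorem linearSubst_mem_homogeneousSubmodule (M : Matrix (Fin n) (Fin n) A) {f : PS K n}
    (hf : f ∈ homogeneousSubmodule (Fin n) K d) :
    linearSubst M f ∈ homogeneousSubmodule (Fin n) A d := by
  have hX (i : Fin n) : (∑ j, M j i • X j : MvPolynomial (Fin n) A).IsHomogeneous 1 :=
    .sum _ _ _ fun j _ ↦ by simpa [smul_eq_C_mul] using (isHomogeneous_X A j).C_mul (M j i)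
  simpa [linearSubst] using IsHomogeneous.aeval hf _ hX

theorem map_linearSubst (η : A →ₐ[K] A') (M : Matrix (Fin n) (Fin n) A) (f : PS K n) :
    MvPolynomial.map (η : A →+* A') (linearSubst M f) = linearSubst (M.map η) f := by
  suffices (mapAlgHom η).comp (linearSubst M) = linearSubst (M.map η) from
    DFunLike.congr_fun this f
  refine algHom_ext fun i ↦ ?_
  simp [linearSubst_X, smul_eq_C_mul]

theorem coordChange_eq_linearSubst (g : GL (Fin n) K) :
    coordChange K n g = linearSubst (g : Matrix (Fin n) (Fin n) K) := rfl

theorem coordChange_X (g : GL (Fin n) K) (i : Fin n) :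
    coordChange K n g (X i) = ∑ j, (g : Matrix (Fin n) (Fin n) K) j i • X j :=
  linearSubst_X _ i

theorem coordChange_mul (g h : GL (Fin n) K) :
    coordChange K n (g * h) = (coordChange K n g).comp (coordChange K n h) := by
  refine algHom_ext fun i ↦ ?_
  simp only [AlgHom.comp_apply, coordChange_X, map_sum, map_smul, Finset.smul_sum, smul_smul]
  rw [Finset.sum_comm]
  simp only [← Finset.sum_smul, Units.val_mul, Matrix.mul_apply, mul_comm]

theorem coordChange_one : coordChange K n 1 = AlgHom.id K (PS K n) :=
  algHom_ext fun i ↦ by simp [coordChange_X, Matrix.one_apply]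

theorem coordChange_inv_apply (g : GL (Fin n) K) (f : PS K n) :
    coordChange K n g⁻¹ (coordChange K n g f) = f := by
  rw [← AlgHom.comp_apply, ← coordChange_mul, inv_mul_cancel, coordChange_one, AlgHom.id_apply]

theorem coordChange_injective (g : GL (Fin n) K) : Function.Injective (coordChange K n g) :=
  Function.LeftInverse.injective (coordChange_inv_apply g)

theorem coordChange_apply_inv (g : GL (Fin n) K) (f : PS K n) :
    coordChange K n g (coordChange K n g⁻¹ f) = f := by
  simpa using coordChange_inv_apply g⁻¹ f

theorem coordChange_mem_homogeneousSubmodule (g : GL (Fin n) K) {f : PS K n}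
    (hf : f ∈ homogeneousSubmodule (Fin n) K d) :
    coordChange K n g f ∈ homogeneousSubmodule (Fin n) K d :=
  linearSubst_mem_homogeneousSubmodule _ hf

theorem homogeneousComponent_coordChange (g : GL (Fin n) K) (f : PS K n) :
    homogeneousComponent d (coordChange K n g f) =
      coordChange K n g (homogeneousComponent d f) := by
  have hcomp (i : ℕ) : homogeneousComponent d (coordChange K n g (homogeneousComponent i f)) =
      coordChange K n g (homogeneousComponent d (homogeneousComponent i f)) := by
    have hi := homogeneousComponent_mem i f
    have hgi := coordChange_mem_homogeneousSubmodule g hi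
    rw [homogeneousComponent_of_mem hi, homogeneousComponent_of_mem hgi,
      apply_ite (coordChange K n g), map_zero]
  conv_lhs => rw [← sum_homogeneousComponent f]
  conv_rhs => rw [← sum_homogeneousComponent f]
  simp only [map_sum, hcomp]

end Substitution

section Translate

variable {V V' V'' W W' : Submodule K (PS K n)} {d : ℕ}

/-- The translate `g(V)` of a space of polynomials by a change of coordinates. -/
def coordTranslate (g : GL (Fin n) K) (V : Submodule K (PS K n)) : Submodule K (PS K n) :=
  V.map (coordChange K n g).toLinearMap

instance (g : GL (Fin n) K) [FiniteDimensional K V] : FiniteDimensional K (coordTranslate g V) :=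
  inferInstanceAs (FiniteDimensional K (V.map (coordChange K n g).toLinearMap))

theorem coordTranslate_mul (g h : GL (Fin n) K) (V : Submodule K (PS K n)) :
    coordTranslate (g * h) V = coordTranslate g (coordTranslate h V) := by
  rw [coordTranslate, coordChange_mul]
  exact Submodule.map_comp (coordChange K n h).toLinearMap (coordChange K n g).toLinearMap V

theorem coordTranslate_coordTranslate_inv (g : GL (Fin n) K) (V : Submodule K (PS K n)) :
    coordTranslate g (coordTranslate g⁻¹ V) = V := by
  rw [← coordTranslate_mul, mul_inv_cancel, coordTranslate, coordChange_one]
  exact Submodule.map_id V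

theorem coordTranslate_sup (g : GL (Fin n) K) (V W : Submodule K (PS K n)) :
    coordTranslate g (V ⊔ W) = coordTranslate g V ⊔ coordTranslate g W := Submodule.map_sup _ _ _

theorem finrank_coordTranslate (g : GL (Fin n) K) (V : Submodule K (PS K n)) :
    Module.finrank K (coordTranslate g V) = Module.finrank K V :=
  (Submodule.equivMapOfInjective (coordChange K n g).toLinearMap
    (coordChange_injective g) V).finrank_eq.symm

theorem finrank_sup_coordTranslate (g : GL (Fin n) K) (W V : Submodule K (PS K n)) :
    Module.finrank K ↥(W ⊔ coordTranslate g V) =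
      Module.finrank K ↥(coordTranslate g⁻¹ W ⊔ V) := by
  rw [← finrank_coordTranslate g (_ ⊔ V), coordTranslate_sup, coordTranslate_coordTranslate_inv]

theorem coordTranslate_le_homogeneousSubmodule (hV : V ≤ homogeneousSubmodule (Fin n) K d)
    (g : GL (Fin n) K) : coordTranslate g V ≤ homogeneousSubmodule (Fin n) K d :=
  Submodule.map_le_iff_le_comap.2 fun _ hf ↦ coordChange_mem_homogeneousSubmodule g (hV hf)

/-- `V'` is a degeneration of `V` as far as dimensions of general sums are concerned: whatever
dimension `V'` reaches in a sum with some other space, a translate of `V` reaches as well. -/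
def SumDominates (V V' : Submodule K (PS K n)) : Prop :=
  ∀ (W : Submodule K (PS K n)) [FiniteDimensional K W], ∃ g : GL (Fin n) K,
    Module.finrank K ↥(W ⊔ V') ≤ Module.finrank K ↥(W ⊔ coordTranslate g V)

theorem sumDominates_coordTranslate (g : GL (Fin n) K) (V : Submodule K (PS K n)) :
    SumDominates V (coordTranslate g V) := fun _ _ ↦ ⟨g, le_rfl⟩

theorem SumDominates.trans (h : SumDominates V V') (h' : SumDominates V' V'') :
    SumDominates V V'' := by
  intro W _
  obtain ⟨g, hg⟩ := h' W
  obtain ⟨k, hk⟩ := h (coordTranslate g⁻¹ W)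
  refine ⟨g * k, ?_⟩
  rw [coordTranslate_mul, finrank_sup_coordTranslate]
  rw [finrank_sup_coordTranslate] at hg
  exact hg.trans hk

theorem SumDominates.exists_finrank_sup_le [FiniteDimensional K V'] [FiniteDimensional K W]
    (hV : SumDominates V V') (hW : SumDominates W W') : ∃ g : GL (Fin n) K,
    Module.finrank K ↥(V' ⊔ W') ≤ Module.finrank K ↥(V ⊔ coordTranslate g W) := by
  obtain ⟨g, hg⟩ := hW V'
  obtain ⟨k, hk⟩ := hV (coordTranslate g W)
  refine ⟨k⁻¹ * g, ?_⟩
  rw [sup_comm _ V', finrank_sup_coordTranslate k, sup_comm _ V, ← coordTranslate_mul] at hk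
  exact hg.trans hk

end Translate

/-! ### Degeneration to the initial space -/

section Degeneration

variable {d : ℕ}

/-- A weight on the variables which refines the lex order in degree `d`. -/
def lexWeight (n d : ℕ) (i : Fin n) : ℕ := (d + 1) ^ (n - (i : ℕ))

theorem weight_lexWeight (u : Fin n →₀ ℕ) :
    Finsupp.weight (lexWeight n d) u = ∑ i, u i * lexWeight n d i := by
  rw [Finsupp.weight_apply, Finsupp.sum_fintype _ _ (by simp)]
  simp only [smul_eq_mul]

theorem weight_lexWeight_lt {u v : Fin n →₀ ℕ} (hu : u.degree = d) (h : lexLt n u v) :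
    Finsupp.weight (lexWeight n d) u < Finsupp.weight (lexWeight n d) v := by
  obtain ⟨i, hi, huv⟩ := lexLt_iff.1 h
  obtain ⟨c, hc⟩ : ∃ c, c = (d + 1) ^ (n - i.1 - 1) := ⟨_, rfl⟩
  have hwi : lexWeight n d i = (d + 1) * c := by
    rw [lexWeight, hc, ← pow_succ', Nat.sub_add_cancel (Nat.sub_pos_of_lt i.2)]
  have hterm (j : Fin n) : u j * lexWeight n d j + (if j = i then lexWeight n d i else 0) ≤
      v j * lexWeight n d j + u j * c := by
    rcases lt_trichotomy j i with hj | rfl | hj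
    · simp [hj.ne, hi j hj]
    · simpa [← Nat.succ_mul] using
        (Nat.mul_le_mul_right (lexWeight n d j) huv).trans (Nat.le_add_right _ _)
    · have hle : lexWeight n d j ≤ c :=
        hc ▸ Nat.pow_le_pow_right (by lia) (by have := Fin.lt_def.1 hj; lia)
      simpa [hj.ne'] using (Nat.mul_le_mul_left (u j) hle).trans (Nat.le_add_left _ _)
  have hsum := Finset.sum_le_sum fun j (_ : j ∈ Finset.univ) ↦ hterm j
  rw [Finset.sum_add_distrib, Finset.sum_add_distrib, ← Finset.sum_mul,
    ← Finsupp.degree_eq_sum, hu, Finset.sum_ite_eq' _ i, if_pos (Finset.mem_univ i), hwi,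
    add_mul, one_mul] at hsum
  have hpos : 0 < c := hc ▸ Nat.pow_pos d.succ_pos
  rw [weight_lexWeight, weight_lexWeight]
  lia

/-- The diagonal change of coordinates `x_i ↦ δ_i x_i`. -/
def diagonalGL (δ : Fin n → Kˣ) : GL (Fin n) K where
  val := Matrix.diagonal fun i ↦ (δ i : K)
  inv := Matrix.diagonal fun i ↦ (↑(δ i)⁻¹ : K)
  val_inv := by simp
  inv_val := by simp

theorem coordChange_diagonalGL_monomial (δ : Fin n → Kˣ) (m : Fin n →₀ ℕ) (c : K) :
    coordChange K n (diagonalGL δ) (monomial m c) = monomial m ((∏ i, (δ i : K) ^ m i) * c) := by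
  have hX (i : Fin n) : coordChange K n (diagonalGL δ) (X i) = C (δ i : K) * X i := by
    simp [coordChange_X, diagonalGL, Matrix.diagonal_apply, smul_eq_C_mul]
  have hC : coordChange K n (diagonalGL δ) (C c) = C c :=
    AlgHom.commutes (coordChange K n (diagonalGL δ)) c
  rw [monomial_eq, monomial_eq, map_mul, hC, Finsupp.prod_fintype _ _ (by simp), map_prod]
  simp only [map_pow, hX, mul_pow, Finset.prod_mul_distrib, map_mul, map_prod]
  ring

theorem coeff_coordChange_diagonalGL (δ : Fin n → Kˣ) (f : PS K n) (m : Fin n →₀ ℕ) :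
    coeff m (coordChange K n (diagonalGL δ) f) = (∏ i, (δ i : K) ^ m i) * coeff m f := by
  induction f using MvPolynomial.induction_on' with
  | monomial u c =>
    rw [coordChange_diagonalGL_monomial, coeff_monomial, coeff_monomial]
    split_ifs with h
    · rw [h]
    · rw [mul_zero]
  | add p q hp hq => rw [map_add, coeff_add, coeff_add, hp, hq, mul_add]

/-- The one-parameter degeneration of a polynomial `f` of degree `d` to its leading term: over
the parameter `T = t ≠ 0` it is a multiple of the image of `f` under a diagonal change of
coordinates, and over `T = 0` it is the leading term. -/
def lexDegeneration (d : ℕ) (f : PS K n) : MvPolynomial (Fin n) (Polynomial K) :=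
  ∑ m ∈ f.support, monomial m (Polynomial.C (coeff m f) * Polynomial.X ^
    (Finsupp.weight (lexWeight n d) (MonomialOrder.lex.degree f) -
      Finsupp.weight (lexWeight n d) m))

theorem coeff_map_lexDegeneration (t : K) (f : PS K n) (m : Fin n →₀ ℕ) :
    coeff m (MvPolynomial.map (Polynomial.evalRingHom t) (lexDegeneration d f)) =
      coeff m f * t ^ (Finsupp.weight (lexWeight n d) (MonomialOrder.lex.degree f) -
        Finsupp.weight (lexWeight n d) m) := by
  classical
  simpa [lexDegeneration, coeff_sum] using fun h ↦ .inl h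

theorem weight_lt_weight_degree {f : PS K n} (hf : f ∈ homogeneousSubmodule (Fin n) K d)
    {m : Fin n →₀ ℕ} (hm : m ∈ f.support) (hne : m ≠ MonomialOrder.lex.degree f) :
    Finsupp.weight (lexWeight n d) m <
      Finsupp.weight (lexWeight n d) (MonomialOrder.lex.degree f) := by
  refine weight_lexWeight_lt ?_ ?_
  · rw [Finsupp.degree_eq_weight_one]
    exact hf (mem_support_iff.1 hm)
  · exact (MonomialOrder.lex.le_degree hm).lt_of_ne fun h ↦
      hne (MonomialOrder.lex.toSyn.injective h)

theorem map_lexDegeneration_zero {f : PS K n} (hf : f ∈ homogeneousSubmodule (Fin n) K d) :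
    MvPolynomial.map (Polynomial.evalRingHom 0) (lexDegeneration d f) =
      MonomialOrder.lex.leadingTerm f := by
  ext m
  rw [coeff_map_lexDegeneration, MonomialOrder.leadingTerm, coeff_monomial]
  split_ifs with h
  · simp [← h, MonomialOrder.leadingCoeff]
  · by_cases hm : m ∈ f.support
    · have := weight_lt_weight_degree hf hm (Ne.symm h)
      rw [zero_pow (by lia), mul_zero]
    · rw [notMem_support_iff.1 hm, zero_mul]

theorem map_lexDegeneration_unit {f : PS K n} (hf : f ∈ homogeneousSubmodule (Fin n) K d)
    (t : Kˣ) :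
    MvPolynomial.map (Polynomial.evalRingHom (t : K)) (lexDegeneration d f) =
      (t : K) ^ Finsupp.weight (lexWeight n d) (MonomialOrder.lex.degree f) •
        coordChange K n (diagonalGL fun i ↦ t⁻¹ ^ lexWeight n d i) f := by
  ext m
  rw [coeff_map_lexDegeneration, coeff_smul, coeff_coordChange_diagonalGL]
  by_cases hm : m ∈ f.support
  · have hle : Finsupp.weight (lexWeight n d) m ≤
        Finsupp.weight (lexWeight n d) (MonomialOrder.lex.degree f) := by
      rcases eq_or_ne m (MonomialOrder.lex.degree f) with h | h
      · rw [← h]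
      · exact (weight_lt_weight_degree hf hm h).le
    have hprod : ∏ i, ((t⁻¹ ^ lexWeight n d i : Kˣ) : K) ^ m i =
        ((t : K) ^ Finsupp.weight (lexWeight n d) m)⁻¹ := by
      simp only [Units.val_pow_eq_pow_val, Units.val_inv_eq_inv_val, inv_pow, ← pow_mul,
        Finset.prod_inv_distrib, Finset.prod_pow_eq_pow_sum, weight_lexWeight, mul_comm]
    rw [hprod, pow_sub₀ _ t.ne_zero hle, smul_eq_mul]
    ring
  · simp [notMem_support_iff.1 hm]

theorem map_evalRingHom_map_C (t : K) (f : PS K n) :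
    MvPolynomial.map (Polynomial.evalRingHom t) (MvPolynomial.map Polynomial.C f) = f := by
  rw [MvPolynomial.map_map]
  exact (congrArg (MvPolynomial.map · f) (RingHom.ext fun a ↦ Polynomial.eval_C)).trans
    (MvPolynomial.map_id f)

theorem span_map_lexDegeneration {V : Submodule K (PS K n)}
    (hV : V ≤ homogeneousSubmodule (Fin n) K d) (W : Submodule K (PS K n)) :
    Submodule.span K (MvPolynomial.map (Polynomial.evalRingHom 0) ''
      (MvPolynomial.map Polynomial.C '' W ∪ lexDegeneration d '' V)) = W ⊔ initialSpace V := by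
  have hV₀ := Set.image_congr fun f (hf : f ∈ V) ↦ map_lexDegeneration_zero (hV hf)
  simp only [Set.image_union, Set.image_image, map_evalRingHom_map_C, Set.image_id',
    Submodule.span_union, Submodule.span_eq, ← span_leadingTerm]
  exact congrArg (W ⊔ Submodule.span K ·) hV₀

theorem sumDominates_initialSpace [Infinite K] {V : Submodule K (PS K n)}
    (hV : V ≤ homogeneousSubmodule (Fin n) K d) : SumDominates V (initialSpace V) := by
  intro W _
  have := Submodule.finiteDimensional_of_le hV
  have := finiteDimensional_initialSpace hV
  obtain ⟨p, m, hp, hm⟩ := exists_coeffMinor_ne_zero_of_span _ (span_map_lexDegeneration hV W)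
  obtain ⟨t, ht⟩ : ∃ t : Kˣ, (coeffMinor p m).eval (t : K) ≠ 0 := by
    by_contra! h
    refine mul_ne_zero (ne_zero_of_map hm) Polynomial.X_ne_zero (Polynomial.funext fun t ↦ ?_)
    rw [Polynomial.eval_mul, Polynomial.eval_X, Polynomial.eval_zero, mul_eq_zero,
      or_iff_not_imp_right]
    exact fun ht ↦ h (Units.mk0 t ht)
  have hpt (i : Fin _) : MvPolynomial.map (Polynomial.evalRingHom (t : K)) (p i) ∈
      W ⊔ coordTranslate (diagonalGL fun i ↦ t⁻¹ ^ lexWeight n d i) V := by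
    rcases hp i with ⟨f, hf, hfi⟩ | ⟨f, hf, hfi⟩
    · rw [← hfi, map_evalRingHom_map_C]
      exact Submodule.mem_sup_left hf
    · rw [← hfi, map_lexDegeneration_unit (hV hf)]
      exact Submodule.mem_sup_right (Submodule.smul_mem _ _ ⟨f, hf, rfl⟩)
  refine ⟨_, (Fintype.card_fin _).symm.trans_le
    (card_le_finrank_of_coeffMinor_ne_zero hpt (m := m) ?_)⟩
  rw [coeffMinor_map]
  exact ht

end Degeneration

/-! ### Degeneration to strongly stable sets of monomials -/

section StronglyStable

variable {d : ℕ} {i j : Fin n} {B : Finset (Fin n →₀ ℕ)}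

/-- The elementary change of coordinates `x_j ↦ x_i + x_j`, which fixes the other variables. -/
def transvectionGL (hij : i ≠ j) : GL (Fin n) K :=
  (Matrix.SpecialLinearGroup.transvection hij (1 : K) : Matrix.SpecialLinearGroup (Fin n) K)

theorem coordChange_transvectionGL_X (hij : i ≠ j) (k : Fin n) :
    coordChange K n (transvectionGL hij) (X k) = if k = j then X i + X j else X k := by
  have hentry (l : Fin n) : ((transvectionGL hij : GL (Fin n) K) : Matrix (Fin n) (Fin n) K) l k =
      (if l = k then 1 else 0) + if i = l ∧ j = k then 1 else 0 := by
    change Matrix.transvection i j (1 : K) l k = _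
    simp [Matrix.transvection, Matrix.one_apply, Matrix.single_apply]
  rw [coordChange_X]
  simp only [hentry, add_smul, Finset.sum_add_distrib, ite_smul, one_smul, zero_smul,
    Finset.sum_ite_eq', Finset.mem_univ, if_true]
  rcases eq_or_ne k j with rfl | hk
  · simp [add_comm]
  · simp [hk, hk.symm]

theorem coordChange_transvectionGL_monomial (hij : i ≠ j) {w : Fin n →₀ ℕ} (hw : w j = 0) (a : ℕ) :
    coordChange K n (transvectionGL hij) (monomial (w + Finsupp.single j a) 1) =
      ∑ p ∈ Finset.HasAntidiagonal.antidiagonal a,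
        monomial (w + Finsupp.single i p.1 + Finsupp.single j p.2) (a.choose p.1 : K) := by
  have hfix : coordChange K n (transvectionGL hij) (monomial w 1) = monomial w 1 := by
    rw [monomial_eq, map_mul, Finsupp.prod, map_prod, map_one, map_one]
    refine congrArg _ (Finset.prod_congr rfl fun k hk ↦ ?_)
    have hkj : k ≠ j := by
      rintro rfl
      exact Finsupp.mem_support_iff.1 hk hw
    rw [map_pow, coordChange_transvectionGL_X, if_neg hkj]
  rw [monomial_add_single, map_mul, hfix, map_pow, coordChange_transvectionGL_X, if_pos rfl,
    (Commute.all _ _).add_pow', Finset.mul_sum]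
  refine Finset.sum_congr rfl fun p _ ↦ ?_
  rw [X_pow_eq_monomial, X_pow_eq_monomial, monomial_mul, mul_smul_comm, monomial_mul, ← add_assoc,
    one_mul, mul_one, ← map_nsmul, nsmul_one]

theorem toLex_add_single_le (hij : i < j) (w : Fin n →₀ ℕ) (a b : ℕ) :
    toLex (w + Finsupp.single j (a + b)) ≤
      toLex (w + Finsupp.single i a + Finsupp.single j b) := by
  rcases Nat.eq_zero_or_pos a with rfl | ha
  · simp
  · exact le_of_lt (lexLt_iff.2 ⟨i, fun l hl ↦ by simp [hl.ne, (hl.trans hij).ne],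
      by simpa [hij.ne] using ha⟩)

theorem coordChange_transvectionGL_mem_restrictSupport (hij : i < j)
    {s : Set (Lex (Fin n →₀ ℕ))} (hs : IsUpperSet s) {f : PS K n}
    (hf : f ∈ restrictSupport K (toLex ⁻¹' s)) :
    coordChange K n (transvectionGL hij.ne) f ∈ restrictSupport K (toLex ⁻¹' s) := by
  rw [restrictSupport_eq_span] at hf
  induction hf using Submodule.span_induction with
  | mem f hf =>
    obtain ⟨m, hm, rfl⟩ := hf
    obtain ⟨w, a, hw, rfl⟩ : ∃ w a, w j = 0 ∧ w + Finsupp.single j a = m :=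
      ⟨m.erase j, m j, Finsupp.erase_same, Finsupp.erase_add_single j m⟩
    dsimp only
    rw [coordChange_transvectionGL_monomial hij.ne hw]
    refine Submodule.sum_mem _ fun p hp ↦ (monomial_mem_restrictSupport K).2 (.inl (hs ?_ hm))
    obtain rfl := Finset.HasAntidiagonal.mem_antidiagonal.1 hp
    exact toLex_add_single_le hij w p.1 p.2
  | zero => simp
  | add f g _ _ hf hg => simpa using add_mem hf hg
  | smul c f _ hf => simpa using Submodule.smul_mem _ c hf

theorem coeff_coordChange_transvectionGL_monomial (hij : i ≠ j) (w : Fin n →₀ ℕ) :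
    coeff (w + Finsupp.single i 1)
      (coordChange K n (transvectionGL hij) (monomial (w + Finsupp.single j 1) 1)) =
      ((w j + 1 : ℕ) : K) := by
  classical
  obtain ⟨u, a, hu, rfl⟩ : ∃ u a, u j = 0 ∧ u + Finsupp.single j a = w :=
    ⟨w.erase j, w j, Finsupp.erase_same, Finsupp.erase_add_single j w⟩
  rw [add_assoc u _ (Finsupp.single j 1), ← Finsupp.single_add,
    coordChange_transvectionGL_monomial hij hu, coeff_sum, Finset.sum_eq_single (1, a),
    coeff_monomial, if_pos (add_right_comm _ _ _)]
  · simp [hu]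
  · rintro ⟨b, c⟩ - hne
    rw [coeff_monomial, if_neg]
    intro h
    have hb : b = 1 := by simpa [hij] using DFunLike.congr_fun h i
    have hc : c = a := by simpa [hij.symm] using DFunLike.congr_fun h j
    exact hne (Prod.ext hb hc)
  · simp [add_comm]

theorem le_degree_of_mem_restrictSupport {p : Fin n →₀ ℕ} {f : PS K n} (hf₀ : f ≠ 0)
    (hf : f ∈ restrictSupport K (toLex ⁻¹' Set.Ici (toLex p))) :
    toLex p ≤ toLex (MonomialOrder.lex.degree f) :=
  hf (MonomialOrder.lex.degree_mem_support hf₀)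

theorem card_le_card_filter_of_le_degree {g : GL (Fin n) K} {Z B' : Finset (Fin n →₀ ℕ)}
    (hZB : Z ⊆ B) (hB' : leadingExps MonomialOrder.lex
      (coordTranslate g (restrictSupport K (B : Set (Fin n →₀ ℕ))) : Set (PS K n)) = B')
    {p : Fin n →₀ ℕ} (hp : ∀ f ∈ restrictSupport K (Z : Set (Fin n →₀ ℕ)), f ≠ 0 →
      toLex p ≤ toLex (MonomialOrder.lex.degree (coordChange K n g f))) :
    #Z ≤ #{m ∈ B' | toLex p ≤ toLex m} := by
  rw [← finrank_restrictSupport (K := K) Z, ← finrank_coordTranslate g]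
  refine finrank_le_of_leadingExps_subset (ord := MonomialOrder.lex) ?_
  rintro _ ⟨_, ⟨⟨f, hf, rfl⟩, hf₀⟩, rfl⟩
  rw [Finset.coe_filter, Set.mem_ofPred_eq, ← Finset.mem_coe, ← hB']
  refine ⟨⟨_, ⟨⟨f, restrictSupport_mono K (Finset.coe_subset.2 hZB) hf, rfl⟩, hf₀⟩, rfl⟩,
    hp f hf fun h ↦ hf₀ ?_⟩
  rw [h, map_zero]
  rfl

theorem le_degree_coordChange_transvectionGL (hij : i < j) {p : Fin n →₀ ℕ} {f : PS K n}
    (hf₀ : f ≠ 0) (hf : f ∈ restrictSupport K (toLex ⁻¹' Set.Ici (toLex p))) :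
    toLex p ≤ toLex (MonomialOrder.lex.degree (coordChange K n (transvectionGL hij.ne) f)) := by
  refine le_degree_of_mem_restrictSupport ?_
    (coordChange_transvectionGL_mem_restrictSupport hij (isUpperSet_Ici _) hf)
  exact (map_ne_zero_iff _ (coordChange_injective _)).2 hf₀

theorem le_degree_coordChange_transvectionGL_of_insert [CharZero K] (hij : i < j)
    {w : Fin n →₀ ℕ} {f : PS K n} (hf₀ : f ≠ 0)
    (hf : f ∈ restrictSupport K (insert (w + Finsupp.single j 1)
      (toLex ⁻¹' Set.Ioi (toLex (w + Finsupp.single i 1))))) :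
    toLex (w + Finsupp.single i 1) ≤
      toLex (MonomialOrder.lex.degree (coordChange K n (transvectionGL hij.ne) f)) := by
  classical
  obtain ⟨c, hc⟩ : ∃ c, c = coeff (w + Finsupp.single j 1) f := ⟨_, rfl⟩
  obtain ⟨h, hh⟩ : ∃ h, h = f - c • monomial (w + Finsupp.single j 1) 1 := ⟨_, rfl⟩
  have hhs : h ∈ restrictSupport K (toLex ⁻¹' Set.Ioi (toLex (w + Finsupp.single i 1))) := by
    refine (mem_restrictSupport_iff K).2 fun m hm ↦ ?_
    rw [hh, Finset.mem_coe, mem_support_iff, coeff_sub, coeff_smul, coeff_monomial] at hm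
    split_ifs at hm with hmu
    · rw [← hmu, hc, smul_eq_mul, mul_one, sub_self] at hm
      exact absurd rfl hm
    · rw [smul_zero, sub_zero] at hm
      exact (hf (mem_support_iff.2 hm)).resolve_left (Ne.symm hmu)
  have hfh : f = h + c • monomial (w + Finsupp.single j 1) 1 := by rw [hh, sub_add_cancel]
  rcases eq_or_ne c 0 with hc₀ | hc₀
  · refine le_degree_coordChange_transvectionGL hij hf₀ ?_
    rw [hfh, hc₀, zero_smul, add_zero]
    exact restrictSupport_mono K (Set.preimage_mono Set.Ioi_subset_Ici_self) hhs
  · refine MonomialOrder.lex.le_degree (mem_support_iff.2 ?_)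
    have hcoeff : coeff (w + Finsupp.single i 1)
        (coordChange K n (transvectionGL hij.ne) h) = 0 := by
      rw [← notMem_support_iff]
      exact fun hm ↦ lt_irrefl (toLex (w + Finsupp.single i 1))
        (coordChange_transvectionGL_mem_restrictSupport hij (isUpperSet_Ioi _) hhs hm)
    rw [hfh, map_add, map_smul, coeff_add, hcoeff, zero_add, coeff_smul,
      coeff_coordChange_transvectionGL_monomial]
    exact mul_ne_zero hc₀ (Nat.cast_ne_zero.2 (w j).succ_ne_zero)

/-- A potential which grows when members of `B` are replaced by lex-larger ones. -/
def lexPotential (d : ℕ) (B : Finset (Fin n →₀ ℕ)) : ℕ :=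
  ∑ p ∈ degreeExps n d, #{m ∈ B | toLex p ≤ toLex m}

theorem exists_lexPotential_lt [CharZero K] (hB : B ⊆ degreeExps n d) (hij : i < j)
    {w : Fin n →₀ ℕ} (hj : w + Finsupp.single j 1 ∈ B) (hi : w + Finsupp.single i 1 ∉ B) :
    ∃ B' ⊆ degreeExps n d, #B' = #B ∧ lexPotential d B < lexPotential d B' ∧
      SumDominates (restrictSupport K (B : Set (Fin n →₀ ℕ)))
        (restrictSupport K (B' : Set (Fin n →₀ ℕ))) := by
  have hU := coordTranslate_le_homogeneousSubmodule
    (restrictSupport_le_homogeneousSubmodule (K := K) hB) (transvectionGL hij.ne)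
  obtain ⟨B', hB'd, hB', hcard⟩ := exists_leadingExps_eq hU
  rw [finrank_coordTranslate, finrank_restrictSupport] at hcard
  refine ⟨B', hB'd, hcard, Finset.sum_lt_sum (fun p _ ↦ ?_) ⟨w + Finsupp.single i 1, ?_, ?_⟩, ?_⟩
  · refine card_le_card_filter_of_le_degree (Finset.filter_subset _ _) hB' fun f hf hf₀ ↦ ?_
    refine le_degree_coordChange_transvectionGL hij hf₀ (restrictSupport_mono K ?_ hf)
    exact fun m hm ↦ (Finset.mem_filter.1 hm).2
  · have hd := mem_degreeExps.1 (hB hj)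
    rw [map_add, Finsupp.degree_single] at hd
    rwa [mem_degreeExps, map_add, Finsupp.degree_single]
  · have hlt : toLex (w + Finsupp.single j 1) < toLex (w + Finsupp.single i 1) :=
      lexLt_single_add_single hij w
    rw [← Nat.succ_le_iff, Nat.succ_eq_add_one, ← Finset.card_insert_of_notMem
      (a := w + Finsupp.single j 1) fun h ↦ hlt.not_ge (Finset.mem_filter.1 h).2]
    refine card_le_card_filter_of_le_degree
      (Finset.insert_subset hj (Finset.filter_subset _ _)) hB' fun f hf hf₀ ↦ ?_
    refine le_degree_coordChange_transvectionGL_of_insert hij hf₀ (restrictSupport_mono K ?_ hf)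
    rw [Finset.coe_insert]
    refine Set.insert_subset_insert fun m hm ↦ ?_
    obtain ⟨hmB, hm⟩ := Finset.mem_filter.1 hm
    exact lt_of_le_of_ne hm fun h ↦ hi (toLex.injective h ▸ hmB)
  · rw [← hB']
    exact (sumDominates_coordTranslate _ _).trans (sumDominates_initialSpace hU)

theorem exists_isStronglyStable_sumDominates [CharZero K] {V : Submodule K (PS K n)}
    (hV : V ≤ homogeneousSubmodule (Fin n) K d) :
    ∃ B ⊆ degreeExps n d, IsStronglyStable B ∧ #B = Module.finrank K V ∧
      SumDominates V (restrictSupport K (B : Set (Fin n →₀ ℕ))) := by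
  classical
  obtain ⟨B₀, hB₀d, hB₀, hcard₀⟩ := exists_leadingExps_eq hV
  obtain ⟨B, hB, hmax⟩ := {B ∈ (degreeExps n d).powerset | #B = Module.finrank K V ∧
    SumDominates V (restrictSupport K (B : Set (Fin n →₀ ℕ)))}.exists_max_image (lexPotential d)
    ⟨B₀, Finset.mem_filter.2 ⟨Finset.mem_powerset.2 hB₀d, hcard₀,
      hB₀ ▸ sumDominates_initialSpace hV⟩⟩
  simp only [Finset.mem_filter, Finset.mem_powerset] at hB hmax
  obtain ⟨hBd, hcard, hdom⟩ := hB
  refine ⟨B, hBd, fun w i j hij hj ↦ ?_, hcard, hdom⟩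
  by_contra hi
  obtain ⟨B', hB'd, hcard', hlt, hdom'⟩ := exists_lexPotential_lt (K := K) hBd hij hj hi
  exact hlt.not_ge (hmax B' ⟨hB'd, hcard'.trans hcard, hdom.trans hdom'⟩)

end StronglyStable

/-! ### Graded parts of ideals -/

section DegreePart

variable {σ A : Type*} [CommRing A] {d : ℕ}

/-- The degree `d` part `I_d` of an ideal of a polynomial ring. -/
def degreePart (I : Ideal (MvPolynomial σ A)) (d : ℕ) : Submodule A (MvPolynomial σ A) :=
  Submodule.restrictScalars A I ⊓ homogeneousSubmodule σ A d

theorem degreePart_le_homogeneousSubmodule (I : Ideal (MvPolynomial σ A)) (d : ℕ) :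
    degreePart I d ≤ homogeneousSubmodule σ A d := inf_le_right

instance (I : Ideal (PS K n)) : FiniteDimensional K (degreePart I d) :=
  Submodule.finiteDimensional_of_le (degreePart_le_homogeneousSubmodule I d)

theorem hilb_eq_finrank_degreePart (I : Ideal (PS K n)) (d : ℕ) :
    hilb K n I d = Module.finrank K (degreePart I d) := rfl

theorem degreePart_inf (I J : Ideal (MvPolynomial σ A)) (d : ℕ) :
    degreePart (I ⊓ J) d = degreePart I d ⊓ degreePart J d :=
  inf_inf_distrib_right (I.restrictScalars A) (J.restrictScalars A) _

variable {I J : Ideal (PS K n)}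

theorem degreePart_sup (hI : IsHomog K n I) (hJ : IsHomog K n J) (d : ℕ) :
    degreePart (I ⊔ J) d = degreePart I d ⊔ degreePart J d := by
  refine le_antisymm ?_ (sup_le (inf_le_inf_right _ fun _ h ↦ Ideal.mem_sup_left h)
    (inf_le_inf_right _ fun _ h ↦ Ideal.mem_sup_right h))
  rintro f ⟨hf, hfd⟩
  obtain ⟨a, ha, b, hb, rfl⟩ := Submodule.mem_sup.1 hf
  rw [← homogeneousComponent_eq_self hfd, map_add]
  exact Submodule.add_mem_sup ⟨hI a ha d, homogeneousComponent_mem d a⟩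
    ⟨hJ b hb d, homogeneousComponent_mem d b⟩

theorem IsHomog.sup (hI : IsHomog K n I) (hJ : IsHomog K n J) : IsHomog K n (I ⊔ J) := by
  intro f hf d
  obtain ⟨a, ha, b, hb, rfl⟩ := Submodule.mem_sup.1 hf
  rw [map_add]
  exact Submodule.add_mem_sup (hI a ha d) (hJ b hb d)

theorem mem_map_coordChange {g : GL (Fin n) K} {f : PS K n} :
    f ∈ J.map (coordChange K n g) ↔ ∃ v ∈ J, coordChange K n g v = f :=
  Ideal.mem_map_iff_of_surjective (coordChange K n g) fun f ↦ ⟨_, coordChange_apply_inv g f⟩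

theorem IsHomog.map_coordChange (hJ : IsHomog K n J) (g : GL (Fin n) K) :
    IsHomog K n (J.map (coordChange K n g)) := by
  intro f hf d
  obtain ⟨v, hv, rfl⟩ := mem_map_coordChange.1 hf
  rw [homogeneousComponent_coordChange]
  exact mem_map_coordChange.2 ⟨_, hJ v hv d, rfl⟩

theorem degreePart_map_coordChange (J : Ideal (PS K n)) (g : GL (Fin n) K) (d : ℕ) :
    degreePart (J.map (coordChange K n g)) d = coordTranslate g (degreePart J d) := by
  ext f
  constructor
  · rintro ⟨hf, hfd⟩
    obtain ⟨v, hv, rfl⟩ := mem_map_coordChange.1 hf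
    refine ⟨v, ⟨hv, ?_⟩, rfl⟩
    have hinv := coordChange_mem_homogeneousSubmodule g⁻¹ hfd
    rwa [coordChange_inv_apply] at hinv
  · rintro ⟨v, hv, rfl⟩
    exact ⟨mem_map_coordChange.2 ⟨v, hv.1, rfl⟩, coordChange_mem_homogeneousSubmodule g hv.2⟩

theorem degree_eq_of_forall_le {ord : MonomialOrder σ} {f : MvPolynomial σ A} {m : σ →₀ ℕ}
    (hm : m ∈ f.support) (h : ∀ m' ∈ f.support, ord.toSyn m' ≤ ord.toSyn m) : ord.degree f = m :=
  ord.toSyn.injective ((ord.degree_le_iff.2 h).antisymm (ord.le_degree hm))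

theorem degree_map_of_leadingCoeff_ne_zero {A' : Type*} [CommRing A'] {ord : MonomialOrder σ}
    (η : A →+* A') {f : MvPolynomial σ A} (hf : η (ord.leadingCoeff f) ≠ 0) :
    ord.degree (MvPolynomial.map η f) = ord.degree f :=
  degree_eq_of_forall_le (by rwa [mem_support_iff, coeff_map]) fun _ hm ↦
    ord.le_degree (support_map_subset _ _ hm)

theorem IsHomog.mem_leadingExps_degreePart (hI : IsHomog K n I) {ord : MonomialOrder (Fin n)}
    {f : PS K n} (hf : f ∈ I) (hf0 : f ≠ 0) {m : Fin n →₀ ℕ} (hm : ord.degree f ≤ m) :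
    m ∈ leadingExps ord (degreePart I m.degree : Set (PS K n)) := by
  classical
  obtain ⟨a, rfl⟩ := exists_add_of_le hm
  set q := f * monomial a 1 with hq
  have hdeg : ord.degree q = ord.degree f + a := by
    rw [hq, ord.degree_mul hf0 (by simp), ord.degree_monomial, if_neg one_ne_zero]
  have hq0 : q ≠ 0 := mul_ne_zero hf0 (by simp)
  rw [← hdeg]
  have hmem : ord.degree q ∈ (homogeneousComponent (ord.degree q).degree q).support := by
    rw [support_homogeneousComponent, Finset.mem_filter]
    exact ⟨ord.degree_mem_support hq0, rfl⟩
  refine ⟨_, ⟨⟨hI _ (I.mul_mem_right _ hf) _, homogeneousComponent_mem _ q⟩,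
    ne_zero_iff.2 ⟨_, mem_support_iff.1 hmem⟩⟩, degree_eq_of_forall_le hmem fun m' hm' ↦ ?_⟩
  rw [support_homogeneousComponent, Finset.mem_filter] at hm'
  exact ord.le_degree hm'.1

end DegreePart

/-! ### General translates maximise dimensions of sums -/

section Generic

variable {I J : Ideal (PS K n)} {d : ℕ}

theorem exists_finset_subset_forall_exists_le {α : Type*} [PartialOrder α]
    [WellQuasiOrderedLE α] (s : Set α) :
    ∃ Φ : Finset α, (∀ m ∈ Φ, m ∈ s) ∧ ∀ v ∈ s, ∃ m ∈ Φ, m ≤ v := by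
  have hpwo : s.IsPWO := Set.isPWO_of_wellQuasiOrderedLE s
  have hfin := WellQuasiOrderedLE.finite_of_isAntichain (setOfPred_minimal_antichain (· ∈ s))
  refine ⟨hfin.toFinset, fun m hm ↦ ((Set.Finite.mem_toFinset hfin).1 hm).1, fun v hv ↦ ?_⟩
  obtain ⟨m, hmv, hm⟩ := hpwo.exists_le_minimal hv
  exact ⟨m, (Set.Finite.mem_toFinset hfin).2 hm, hmv⟩

/-- Evaluation of polynomials in the entries of the generic matrix at a point of `GL_n(K)`. -/
def evalGL (g : GL (Fin n) K) : MvPolynomial (Fin n × Fin n) K →+* K :=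
  MvPolynomial.eval fun p ↦ (g : Matrix (Fin n) (Fin n) K) p.1 p.2

theorem map_evalGL_map_C (g : GL (Fin n) K) (f : PS K n) :
    MvPolynomial.map (evalGL g) (MvPolynomial.map C f) = f := by
  rw [MvPolynomial.map_map, evalGL, MvPolynomial.eval, eval₂Hom_comp_C]
  exact MvPolynomial.map_id f

theorem map_evalGL_linearSubst (g : GL (Fin n) K) (f : PS K n) :
    MvPolynomial.map (evalGL g) (linearSubst (Matrix.mvPolynomialX (Fin n) (Fin n) K) f) =
      coordChange K n g f := by
  rw [evalGL, ← coe_aeval_eq_eval, map_linearSubst, coordChange_eq_linearSubst]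
  congr 2
  exact Matrix.mvPolynomialX_mapMatrix_aeval K (g : Matrix (Fin n) (Fin n) K)

/-- The ideal `I + g(J)` for the generic matrix `g`, over the polynomial ring in the entries
of `g`. -/
def genericSum (I J : Ideal (PS K n)) :
    Ideal (MvPolynomial (Fin n) (MvPolynomial (Fin n × Fin n) K)) :=
  Ideal.span (MvPolynomial.map C '' (I : Set (PS K n)) ∪
    linearSubst (Matrix.mvPolynomialX (Fin n) (Fin n) K) '' (J : Set (PS K n)))

theorem map_evalGL_mem (g : GL (Fin n) K)
    {q : MvPolynomial (Fin n) (MvPolynomial (Fin n × Fin n) K)} (hq : q ∈ genericSum I J) :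
    MvPolynomial.map (evalGL g) q ∈ I ⊔ J.map (coordChange K n g) := by
  suffices genericSum I J ≤ (I ⊔ J.map (coordChange K n g)).comap
    (MvPolynomial.map (evalGL g)) from this hq
  refine Ideal.span_le.2 ?_
  rintro _ (⟨f, hf, rfl⟩ | ⟨f, hf, rfl⟩)
  · rw [SetLike.mem_coe, Ideal.mem_comap, map_evalGL_map_C]
    exact Ideal.mem_sup_left hf
  · rw [SetLike.mem_coe, Ideal.mem_comap, map_evalGL_linearSubst]
    exact Ideal.mem_sup_right (mem_map_coordChange.2 ⟨f, hf, rfl⟩)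

theorem generally_leadingExps_genericSum_subset (hI : IsHomog K n I) (hJ : IsHomog K n J) :
    generally K n fun g ↦ ∀ m ∈ leadingExps MonomialOrder.lex (SetLike.coe (genericSum I J)),
      m ∈ leadingExps MonomialOrder.lex
        (degreePart (I ⊔ J.map (coordChange K n g)) m.degree : Set (PS K n)) := by
  obtain ⟨Φ, hΦ, hΦ_le⟩ := exists_finset_subset_forall_exists_le
    (leadingExps MonomialOrder.lex (SetLike.coe (genericSum I J)))
  choose! f hf hdeg using hΦ
  refine ⟨∏ m ∈ Φ, MonomialOrder.lex.leadingCoeff (f m), Finset.prod_ne_zero_iff.2 fun m hm ↦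
    MonomialOrder.lex.leadingCoeff_ne_zero_iff.2 (hf m hm).2, fun g hg v hv ↦ ?_⟩
  obtain ⟨m, hm, hmv⟩ := hΦ_le v hv
  rw [map_prod] at hg
  have hlead : evalGL g (MonomialOrder.lex.leadingCoeff (f m)) ≠ 0 :=
    Finset.prod_ne_zero_iff.1 hg m hm
  refine (hI.sup (hJ.map_coordChange g)).mem_leadingExps_degreePart
    (map_evalGL_mem g (hf m hm).1) (ne_zero_iff.2 ⟨_, by rwa [coeff_map]⟩) ?_
  rwa [degree_map_of_leadingCoeff_ne_zero _ hlead, hdeg m hm]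

theorem span_map_evalGL_degreePart_genericSum (hI : IsHomog K n I) (hJ : IsHomog K n J)
    (g : GL (Fin n) K) (d : ℕ) : Submodule.span K
      (MvPolynomial.map (evalGL g) '' SetLike.coe (degreePart (genericSum I J) d)) =
        degreePart I d ⊔ coordTranslate g (degreePart J d) := by
  refine le_antisymm (Submodule.span_le.2 ?_) (sup_le ?_ ?_)
  · rintro _ ⟨q, ⟨hq, hqd⟩, rfl⟩
    rw [← degreePart_map_coordChange, ← degreePart_sup hI (hJ.map_coordChange g)]
    exact ⟨map_evalGL_mem g hq, IsHomogeneous.map hqd _⟩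
  · rintro f ⟨hf, hfd⟩
    refine Submodule.subset_span ⟨MvPolynomial.map C f, ⟨?_, ?_⟩, map_evalGL_map_C g f⟩
    · exact Ideal.subset_span (.inl ⟨f, hf, rfl⟩)
    · exact IsHomogeneous.map hfd _
  · rintro _ ⟨f, ⟨hf, hfd⟩, rfl⟩
    refine Submodule.subset_span ⟨linearSubst (Matrix.mvPolynomialX (Fin n) (Fin n) K) f,
      ⟨?_, linearSubst_mem_homogeneousSubmodule _ hfd⟩, map_evalGL_linearSubst g f⟩
    exact Ideal.subset_span (.inr ⟨f, hf, rfl⟩)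

theorem finrank_sup_coordTranslate_le_card (hI : IsHomog K n I) (hJ : IsHomog K n J)
    (g : GL (Fin n) K) {Λ : Finset (Fin n →₀ ℕ)} (hΛ : leadingExps MonomialOrder.lex
      (SetLike.coe (degreePart (genericSum I J) d)) ⊆ Λ) :
    Module.finrank K ↥(degreePart I d ⊔ coordTranslate g (degreePart J d)) ≤ #Λ := by
  obtain ⟨p, m, hp, hm⟩ := exists_coeffMinor_ne_zero_of_span _
    (span_map_evalGL_degreePart_genericSum hI hJ g d)
  have hli := linearIndependent_of_coeffMinor_ne_zero fun h ↦ hm (by rw [h, map_zero])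
  have hspan : Submodule.span _ (Set.range p) ≤ degreePart (genericSum I J) d :=
    Submodule.span_le.2 (Set.range_subset_iff.2 hp)
  have hsub := Set.image_mono (f := MonomialOrder.lex.degree)
    (Set.sdiff_subset_sdiff_left (t := {0}) hspan)
  simpa using card_le_of_leadingExps_subset hli (hsub.trans hΛ)

theorem generally_finrank_sup_coordTranslate_le (hI : IsHomog K n I) (hJ : IsHomog K n J) :
    generally K n fun g ↦ ∀ (d : ℕ) (g₀ : GL (Fin n) K),
      Module.finrank K ↥(degreePart I d ⊔ coordTranslate g₀ (degreePart J d)) ≤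
        Module.finrank K ↥(degreePart I d ⊔ coordTranslate g (degreePart J d)) := by
  classical
  obtain ⟨F, hF, hlead⟩ := generally_leadingExps_genericSum_subset hI hJ
  refine ⟨F, hF, fun g hg d g₀ ↦ ?_⟩
  set Λ := {m ∈ degreeExps n d | m ∈ leadingExps MonomialOrder.lex (SetLike.coe (genericSum I J))}
    with hΛ
  calc Module.finrank K ↥(degreePart I d ⊔ coordTranslate g₀ (degreePart J d))
    _ ≤ #Λ := finrank_sup_coordTranslate_le_card hI hJ g₀ fun m hm ↦ ?_
    _ ≤ _ := card_le_finrank_of_subset_leadingExps (ord := MonomialOrder.lex) fun m hm ↦ ?_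
  · have hmd := leadingExps_subset_degree_eq (degreePart_le_homogeneousSubmodule _ d) hm
    obtain ⟨q, ⟨hq, hq0⟩, rfl⟩ := hm
    exact Finset.mem_filter.2 ⟨mem_degreeExps.2 hmd, q, ⟨hq.1, hq0⟩, rfl⟩
  · rw [hΛ, Finset.mem_coe, Finset.mem_filter, mem_degreeExps] at hm
    rw [← degreePart_map_coordChange, ← degreePart_sup hI (hJ.map_coordChange g), ← hm.1]
    exact hlead g hg m hm.2

end Generic

/-! ### Degeneration to an opposite lex ideal -/

section MonomialExps

variable {I J : Ideal (PS K n)} {d : ℕ}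

/-- The exponent vectors of the monomials of degree `d` in the ideal `I`. -/
def monomialExps (I : Ideal (PS K n)) (d : ℕ) : Finset (Fin n →₀ ℕ) :=
  open Classical in (degreeExps n d).filter fun m ↦ monomial m (1 : K) ∈ I

theorem mem_monomialExps {m : Fin n →₀ ℕ} :
    m ∈ monomialExps I d ↔ m.degree = d ∧ monomial m (1 : K) ∈ I := by
  classical
  rw [monomialExps, Finset.mem_filter, mem_degreeExps]

theorem monomialExps_subset : monomialExps I d ⊆ degreeExps n d :=
  fun _ hm ↦ mem_degreeExps.2 (mem_monomialExps.1 hm).1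

theorem monomialExps_inf [DecidableEq (Fin n →₀ ℕ)] :
    monomialExps (I ⊓ J) d = monomialExps I d ∩ monomialExps J d := by
  ext m
  simp only [Finset.mem_inter, mem_monomialExps, Submodule.mem_inf]
  tauto

theorem IsMonomialIdeal.inf (hI : IsMonomialIdeal K n I) (hJ : IsMonomialIdeal K n J) :
    IsMonomialIdeal K n (I ⊓ J) := fun f hf m hm ↦ ⟨hI f hf.1 m hm, hJ f hf.2 m hm⟩

theorem IsMonomialIdeal.degreePart_eq (hI : IsMonomialIdeal K n I) (d : ℕ) :
    degreePart I d = restrictSupport K (monomialExps I d : Set (Fin n →₀ ℕ)) := by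
  refine le_antisymm (fun f hf ↦ (mem_restrictSupport_iff K).2 fun m hm ↦ ?_) ?_
  · refine mem_monomialExps.2 ⟨?_, hI f hf.1 m hm⟩
    rw [Finsupp.degree_eq_weight_one]
    exact hf.2 (mem_support_iff.1 hm)
  · rw [restrictSupport_eq_span, Submodule.span_le]
    rintro _ ⟨m, hm, rfl⟩
    obtain ⟨hmd, hmI⟩ := mem_monomialExps.1 hm
    exact ⟨hmI, isHomogeneous_monomial _ hmd⟩

theorem IsMonomialIdeal.hilb_eq_card (hI : IsMonomialIdeal K n I) (d : ℕ) :
    hilb K n I d = #(monomialExps I d) := by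
  rw [hilb_eq_finrank_degreePart, hI.degreePart_eq, finrank_restrictSupport]

theorem isSegment_monomialExps {r : (Fin n →₀ ℕ) → (Fin n →₀ ℕ) → Prop}
    (h : ∀ u v, expDeg n u = expDeg n v → monomial u (1 : K) ∈ I → r u v →
      monomial v (1 : K) ∈ I) (d : ℕ) : IsSegment r (degreeExps n d) (monomialExps I d) where
  subset := monomialExps_subset
  mem_of_rel u hu v hv huv := by
    obtain ⟨hud, huI⟩ := mem_monomialExps.1 hu
    rw [mem_degreeExps] at hv
    refine mem_monomialExps.2 ⟨hv, h u v ?_ huI huv⟩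
    rw [expDeg, expDeg, ← Finsupp.degree_eq_sum, ← Finsupp.degree_eq_sum, hud, hv]

theorem leadingExps_eq_setOf_isMax_lexLt (s : Set (PS K n)) :
    leadingExps MonomialOrder.lex s =
      {m | ∃ f ∈ s, m ∈ f.support ∧ ∀ m' ∈ f.support, m' = m ∨ lexLt n m' m} := by
  ext m
  constructor
  · rintro ⟨f, ⟨hf, hf0⟩, rfl⟩
    refine ⟨f, hf, MonomialOrder.lex.degree_mem_support hf0, fun m' hm' ↦ ?_⟩
    exact (MonomialOrder.lex.le_degree hm').eq_or_lt.imp_left fun h ↦ toLex.injective h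
  · rintro ⟨f, hf, hm, hmax⟩
    refine ⟨f, ⟨hf, by rintro rfl; simp at hm⟩, degree_eq_of_forall_le hm fun m' hm' ↦ ?_⟩
    rcases hmax m' hm' with rfl | h
    · exact le_rfl
    · exact le_of_lt h

theorem monomial_mem_initialIdealO_iff {v : Fin n →₀ ℕ} :
    monomial v (1 : K) ∈ initialIdealO K n (lexLt n) I ↔
      ∃ m ∈ leadingExps MonomialOrder.lex (I : Set (PS K n)), m ≤ v := by
  have hspan : initialIdealO K n (lexLt n) I = Ideal.span
      ((fun m ↦ monomial m (1 : K)) '' leadingExps MonomialOrder.lex (I : Set (PS K n))) := by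
    rw [leadingExps_eq_setOf_isMax_lexLt, initialIdealO]
    congr 1
    ext q
    simp only [Set.mem_image, Set.mem_ofPred_eq, SetLike.mem_coe]
    constructor
    · rintro ⟨f, hf, m, hm, hmax, rfl⟩
      exact ⟨m, ⟨f, hf, hm, hmax⟩, rfl⟩
    · rintro ⟨m, ⟨f, hf, hm, hmax⟩, rfl⟩
      exact ⟨f, hf, m, hm, hmax, rfl⟩
  classical
  rw [hspan, mem_ideal_span_monomial_image, support_monomial, if_neg one_ne_zero]
  simp only [Finset.mem_singleton, forall_eq]

theorem IsHomog.leadingExps_degreePart (hI : IsHomog K n I) (d : ℕ) :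
    leadingExps MonomialOrder.lex (degreePart I d : Set (PS K n)) =
      monomialExps (initialIdealO K n (lexLt n) I) d := by
  ext v
  rw [SetLike.mem_coe, mem_monomialExps, monomial_mem_initialIdealO_iff]
  constructor
  · intro hv
    have hvd := leadingExps_subset_degree_eq (degreePart_le_homogeneousSubmodule I d) hv
    obtain ⟨f, ⟨hf, hf0⟩, rfl⟩ := hv
    exact ⟨hvd, _, ⟨f, ⟨hf.1, hf0⟩, rfl⟩, le_rfl⟩
  · rintro ⟨rfl, _, ⟨f, ⟨hf, hf0⟩, rfl⟩, hv⟩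
    exact hI.mem_leadingExps_degreePart hf hf0 hv

end MonomialExps

section Reversal

variable {J : Ideal (PS K n)} {d : ℕ}

/-- Reversal of the variables on exponent vectors; it exchanges the lexicographic orders induced
by `x_1 > ⋯ > x_n` and by `x_n > ⋯ > x_1`. -/
def revExp (n : ℕ) : (Fin n →₀ ℕ) ≃ (Fin n →₀ ℕ) := Finsupp.equivCongrLeft Fin.revPerm

theorem IsSegment.map_revExp {C : Finset (Fin n →₀ ℕ)}
    (hC : IsSegment (lexLt n) (degreeExps n d) C) :
    IsSegment (oplexLt n) (degreeExps n d) (C.map (revExp n).toEmbedding) := by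
  have hdeg (m : Fin n →₀ ℕ) : ((revExp n).symm m).degree = m.degree := by
    rw [Finsupp.degree_eq_sum, Finsupp.degree_eq_sum]
    exact Equiv.sum_comp Fin.revPerm m
  have hmem {m : Fin n →₀ ℕ} : (revExp n).symm m ∈ degreeExps n d ↔ m ∈ degreeExps n d := by
    rw [mem_degreeExps, mem_degreeExps, hdeg]
  refine ⟨fun u hu ↦ hmem.1 (hC.subset (Finset.mem_map_equiv.1 hu)), fun u hu v hv huv ↦ ?_⟩
  rw [Finset.mem_map_equiv] at hu ⊢
  refine hC.mem_of_rel _ hu _ (hmem.2 hv) ?_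
  obtain ⟨i, hi, hlt⟩ := oplexLt_iff.1 huv
  refine lexLt_iff.2 ⟨i.rev, fun j hj ↦ hi _ ?_, ?_⟩
  · exact Fin.lt_rev_iff.1 hj
  · change u i.rev.rev < v i.rev.rev
    rwa [Fin.rev_rev]

theorem exists_coordChange_eq_rename (e : Equiv.Perm (Fin n)) :
    ∃ g : GL (Fin n) K, coordChange K n g = rename e := by
  refine ⟨.mk'' (e⁻¹.permMatrix K) ?_, algHom_ext fun i ↦ ?_⟩
  · rw [Matrix.det_permutation]
    exact (Units.isUnit _).map (Int.castRingHom K)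
  · rw [coordChange_X, rename_X]
    change ∑ j, e⁻¹.permMatrix K j i • X j = X (e i)
    simp [Equiv.Perm.permMatrix, PEquiv.toMatrix_apply, Equiv.symm_apply_eq]

theorem sumDominates_restrictSupport_map_revExp (B : Finset (Fin n →₀ ℕ)) :
    SumDominates (restrictSupport K (B : Set (Fin n →₀ ℕ)))
      (restrictSupport K (B.map (revExp n).toEmbedding : Set (Fin n →₀ ℕ))) := by
  obtain ⟨g, hg⟩ := exists_coordChange_eq_rename (K := K) (Fin.revPerm (n := n))
  have hgB : coordTranslate g (restrictSupport K (B : Set (Fin n →₀ ℕ))) =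
      restrictSupport K (B.map (revExp n).toEmbedding : Set (Fin n →₀ ℕ)) := by
    rw [coordTranslate, hg, restrictSupport_eq_span, restrictSupport_eq_span, Submodule.map_span,
      Finset.coe_map, Set.image_image, Set.image_image]
    congr! 2
    rw [AlgHom.toLinearMap_apply, rename_monomial, ← Finsupp.equivMapDomain_eq_mapDomain]
    rfl
  exact hgB ▸ sumDominates_coordTranslate g _

theorem exists_of_generally [Infinite K] {P : GL (Fin n) K → Prop} (hP : generally K n P) :
    ∃ g, P g := by
  obtain ⟨F, hF, hFP⟩ := hP
  obtain ⟨x, hx⟩ : ∃ x, MvPolynomial.eval x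
      (F * (Matrix.mvPolynomialX (Fin n) (Fin n) K).det) ≠ 0 := by
    by_contra! h
    exact mul_ne_zero hF (Matrix.det_mvPolynomialX_ne_zero (Fin n) K)
      (MvPolynomial.funext fun x ↦ by rw [h x, map_zero])
  rw [map_mul, Matrix.eval_det_mvPolynomialX] at hx
  exact ⟨.mkOfDetNeZero _ (right_ne_zero_of_mul hx), hFP _ (left_ne_zero_of_mul hx)⟩

theorem IsHomog.sumDominates_oplex [Infinite K] (hJ : IsHomog K n J) {g : GL (Fin n) K}
    (hlex : IsLexIdeal K n (initialIdealO K n (lexLt n) (J.map (coordChange K n g))))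
    {Jop : Ideal (PS K n)} (hJop : IsOplexIdeal K n Jop) (hhilb : hilb K n Jop d = hilb K n J d) :
    SumDominates (degreePart J d) (restrictSupport K (monomialExps Jop d : Set (Fin n →₀ ℕ))) := by
  set L := monomialExps (initialIdealO K n (lexLt n) (J.map (coordChange K n g))) d
  have hL := (hJ.map_coordChange g).leadingExps_degreePart d
  have hcard : #L = hilb K n J d := by
    obtain ⟨B, -, hB, hcard⟩ := exists_leadingExps_eq
      (degreePart_le_homogeneousSubmodule (J.map (coordChange K n g)) d)
    rw [degreePart_map_coordChange, finrank_coordTranslate] at hcard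
    have hLB : L = B := Finset.coe_injective (hL.symm.trans hB)
    rw [hLB, hcard, hilb_eq_finrank_degreePart]
  have hrev : L.map (revExp n).toEmbedding = monomialExps Jop d := by
    refine (isSegment_monomialExps hlex.2 d).map_revExp.eq_of_card_eq
      (isSegment_monomialExps hJop.2 d) ?_
    rw [Finset.card_map, hcard, ← hhilb, hJop.1.hilb_eq_card]
  have hinit := sumDominates_initialSpace
    (degreePart_le_homogeneousSubmodule (J.map (coordChange K n g)) d)
  rw [initialSpace, hL, degreePart_map_coordChange] at hinit
  rw [← hrev]
  exact ((sumDominates_coordTranslate g _).trans hinit).trans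
    (sumDominates_restrictSupport_map_revExp L)

end Reversal

/-! ### Hilbert functions of intersections -/

section Intersection

variable {I J : Ideal (PS K n)}

theorem restrictSupport_sup_restrictSupport [DecidableEq (Fin n →₀ ℕ)]
    (B C : Finset (Fin n →₀ ℕ)) :
    restrictSupport K (B : Set (Fin n →₀ ℕ)) ⊔ restrictSupport K C =
      restrictSupport K ((B ∪ C : Finset (Fin n →₀ ℕ)) : Set (Fin n →₀ ℕ)) := by
  rw [restrictSupport_eq_span, restrictSupport_eq_span, restrictSupport_eq_span, Finset.coe_union,
    Set.image_union, Submodule.span_union]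

theorem finrank_sup_add_hilb_inf (I J : Ideal (PS K n)) (g : GL (Fin n) K) (d : ℕ) :
    Module.finrank K ↥(degreePart I d ⊔ coordTranslate g (degreePart J d)) +
      hilb K n (I ⊓ J.map (coordChange K n g)) d = hilb K n I d + hilb K n J d := by
  rw [hilb_eq_finrank_degreePart, hilb_eq_finrank_degreePart, hilb_eq_finrank_degreePart,
    degreePart_inf, degreePart_map_coordChange, Submodule.finrank_sup_add_finrank_inf_eq,
    finrank_coordTranslate]

theorem exists_hilb_inf_map_coordChange_le [CharZero K] {Ilex Jop : Ideal (PS K n)}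
    (hIlex : IsLexIdeal K n Ilex) (hJop : IsOplexIdeal K n Jop) {d : ℕ}
    (hI : hilb K n Ilex d = hilb K n I d) (hJ : hilb K n Jop d = hilb K n J d)
    (hdom : SumDominates (degreePart J d)
      (restrictSupport K (monomialExps Jop d : Set (Fin n →₀ ℕ)))) :
    ∃ g, hilb K n (I ⊓ J.map (coordChange K n g)) d ≤ hilb K n (Ilex ⊓ Jop) d := by
  classical
  obtain ⟨B, hBd, hB, hBcard, hBdom⟩ :=
    exists_isStronglyStable_sumDominates (degreePart_le_homogeneousSubmodule I d)
  obtain ⟨g, hg⟩ := hBdom.exists_finrank_sup_le hdom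
  refine ⟨g, ?_⟩
  rw [restrictSupport_sup_restrictSupport, finrank_restrictSupport] at hg
  rw [← hilb_eq_finrank_degreePart, ← hI, hIlex.1.hilb_eq_card] at hBcard
  have hle : #(B ∩ monomialExps Jop d) ≤ #(monomialExps Ilex d ∩ monomialExps Jop d) :=
    hB.card_inter_oplex_le hBd (isSegment_monomialExps hIlex.2 d)
      (isSegment_monomialExps hJop.2 d) hBcard.symm
  rw [← monomialExps_inf, ← (hIlex.1.inf hJop.1).hilb_eq_card] at hle
  have hdim := finrank_sup_add_hilb_inf I J g d
  rw [← hI, ← hJ, hIlex.1.hilb_eq_card, hJop.1.hilb_eq_card] at hdim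
  have hcard := Finset.card_union_add_card_inter B (monomialExps Jop d)
  lia

theorem generally_hilb_inf_map_coordChange_le (hI : IsHomog K n I) (hJ : IsHomog K n J) :
    generally K n fun g ↦ ∀ (d : ℕ) (g₀ : GL (Fin n) K),
      hilb K n (I ⊓ J.map (coordChange K n g)) d ≤
        hilb K n (I ⊓ J.map (coordChange K n g₀)) d := by
  obtain ⟨F, hF, hmax⟩ := generally_finrank_sup_coordTranslate_le hI hJ
  refine ⟨F, hF, fun g hg d g₀ ↦ ?_⟩
  have hle := hmax g hg d g₀
  have hg := finrank_sup_add_hilb_inf I J g d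
  have hg₀ := finrank_sup_add_hilb_inf I J g₀ d
  lia

end Intersection

variable (K n)

/-- **Theorem 1.3** (Caviglia–Murai): suppose `char K = 0`.  Let `I, J ⊆ S` be homogeneous
ideals such that `Gin_lex(J)` is lex.  For a general change of coordinates `g ∈ GL_n(K)`,
`H(I ∩ g(J), d) ≤ H(I^lex ∩ J^oplex, d)` for all `d ≥ 0`. -/
theorem hilb_general_intersection_le_lex [CharZero K]
    (I J : Ideal (PS K n)) (hI : IsHomog K n I) (hJ : IsHomog K n J)
    (GinJ : Ideal (PS K n))
    (hGinJ : generally K n (fun g =>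
      initialIdealO K n (lexLt n) (Ideal.map (coordChange K n g) J) = GinJ))
    (hGinJlex : IsLexIdeal K n GinJ)
    (Ilex : Ideal (PS K n)) (hIlex : IsLexIdeal K n Ilex)
    (hIlexHilb : ∀ d : ℕ, hilb K n Ilex d = hilb K n I d)
    (Jop : Ideal (PS K n)) (hJop : IsOplexIdeal K n Jop)
    (hJopHilb : ∀ d : ℕ, hilb K n Jop d = hilb K n J d)
 :
    generally K n (fun g => ∀ d : ℕ,
      hilb K n (I ⊓ Ideal.map (coordChange K n g) J) d ≤ hilb K n (Ilex ⊓ Jop) d) := by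
  obtain ⟨g, hg⟩ := exists_of_generally hGinJ
  obtain ⟨F, hF, hmin⟩ := generally_hilb_inf_map_coordChange_le hI hJ
  refine ⟨F, hF, fun g' hg' d ↦ ?_⟩
  obtain ⟨g₀, hg₀⟩ := exists_hilb_inf_map_coordChange_le hIlex hJop (hIlexHilb d) (hJopHilb d)
    (hJ.sumDominates_oplex (hg ▸ hGinJlex) hJop (hJopHilb d))
  exact (hmin g' hg' d g₀).trans hg₀

end
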